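/- Assume Schanuel's Conjecture. Let f, g ∈ 𝓔 be nonzero exponential polynomials with f irreducible. If f and g have infinitely many common zeros in ℂ, then f divides g in the ring 𝓔. -/

import Mathlib

open Complex Set

noncomputable section

/-- `f` is an exponential polynomial, i.e. an element of the ring `𝓔`. -/
def IsExpPoly (f : ℂ → ℂ) : Prop :=
  ∃ (N : ℕ) (lam mu : Fin N → ℂ),
    ∀ z : ℂ, f z = ∑ i, lam i * Complex.exp (mu i * z)

/-- `h` divides `f` in the ring `𝓔`. -/
def EDvd (h f : ℂ → ℂ) : Prop :=
  ∃ q : ℂ → ℂ, IsExpPoly q ∧ f = h * q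

/-- `f` is a unit of the ring `𝓔`. -/
def EUnit (f : ℂ → ℂ) : Prop :=
  IsExpPoly f ∧ ∃ g : ℂ → ℂ, IsExpPoly g ∧ f * g = 1

/-- `f` is irreducible in the ring `𝓔`. -/
def EIrreducible (f : ℂ → ℂ) : Prop :=
  IsExpPoly f ∧ f ≠ 0 ∧ ¬ EUnit f ∧
    ∀ g h : ℂ → ℂ, IsExpPoly g → IsExpPoly h → f = g * h → EUnit g ∨ EUnit h

/-- canonical representation: pairwise distinct exponents, nonzero coefficients. -/
def IsCanonicalRep (f : ℂ → ℂ) {N : ℕ} (lam mu : Fin N → ℂ) : Prop :=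
  (∀ i, lam i ≠ 0) ∧ Function.Injective mu ∧
    ∀ z : ℂ, f z = ∑ i, lam i * Complex.exp (mu i * z)

/-- `f` is a simple exponential polynomial: its support has `ℚ`-dimension 1. -/
def IsSimple (f : ℂ → ℂ) : Prop :=
  ∃ (N : ℕ) (lam mu : Fin N → ℂ), IsCanonicalRep f lam mu ∧
    Module.finrank ℚ (Submodule.span ℚ (Set.range mu)) = 1

/-- Transcendence degree over `ℚ` of (the field generated by) a set of complex numbers. -/
noncomputable def trdegQ (s : Set ℂ) : Cardinal.{0} :=
  ⨆ t : {t : Finset ℂ // ↑t ⊆ s ∧ AlgebraicIndependent ℚ (Subtype.val : {x : ℂ // x ∈ t} → ℂ)},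
    (t.1.card : Cardinal)

/-- Schanuel's Conjecture. -/
def SchanuelConjecture : Prop :=
  ∀ (n : ℕ) (lam : Fin n → ℂ), LinearIndependent ℚ lam →
    (n : Cardinal) ≤ trdegQ (Set.range lam ∪ Set.range fun i => Complex.exp (lam i))

namespace Shp

lemma char_group {G : Type*} [Monoid G] {ι : Type*} (s : Finset ι) (χ : ι → (G →* ℂ)) (c : ι → ℂ)
    (h : ∀ g, ∑ i ∈ s, c i * χ i g = 0) (P : (G →* ℂ) → Prop) [DecidablePred P] :
    ∑ i ∈ s with P (χ i), c i = 0 := by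
  classical
  have li := linearIndependent_monoidHom G ℂ
  set l : (G →* ℂ) →₀ ℂ := ∑ i ∈ s, Finsupp.single (χ i) (c i) with hl
  have h0 : l = 0 := by
    rw [linearIndependent_iff] at li
    apply li
    rw [hl, map_sum]
    funext g
    simp only [Finsupp.linearCombination_single, Finset.sum_apply, Pi.smul_apply, smul_eq_mul,
      Pi.zero_apply]
    exact h g
  have h1 : ∀ ψ, ∑ i ∈ s with χ i = ψ, c i = 0 := by
    intro ψ
    have := DFunLike.congr_fun h0 ψ
    rw [hl, Finsupp.finsetSum_apply] at this
    simpa [Finsupp.single_apply, Finset.sum_filter] using this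
  have h2 := Finset.sum_fiberwise_of_maps_to (s := s.filter (fun i => P (χ i))) (t := (s.image χ).filter P)
    (g := χ) (fun i hi => by
      simp only [Finset.mem_filter] at hi
      simp only [Finset.mem_filter, Finset.mem_image]
      exact ⟨⟨i, hi.1, rfl⟩, hi.2⟩) c
  rw [← h2]
  apply Finset.sum_eq_zero
  intro ψ hψ
  rw [← h1 ψ]
  apply Finset.sum_congr _ (fun _ _ => rfl)
  ext i
  simp only [Finset.mem_filter] at hψ ⊢
  constructor
  · rintro ⟨⟨a, b⟩, c⟩; exact ⟨a, c⟩
  · rintro ⟨a, c⟩; exact ⟨⟨a, c ▸ hψ.2⟩, c⟩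

lemma exists_derivation (t : ℂ) (ht : Transcendental ℚ t) :
    ∃ D : Derivation ℚ ℂ ℂ, D t ≠ 0 := by
  classical
  have hti : AlgebraicIndepOn ℚ id ({t} : Set ℂ) := by
    have := (algebraicIndependent_unique_type_iff (R := ℚ) (x := fun i : ({t} : Set ℂ) => (i : ℂ))).2
      (by simpa using ht)
    exact this
  obtain ⟨s, hts, hs⟩ := exists_isTranscendenceBasis_superset hti
  let A := MvPolynomial s ℚ
  let φ : A →ₐ[ℚ] ℂ := MvPolynomial.aeval (fun i : s => (i : ℂ))
  have hinj : Function.Injective φ := hs.1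
  let _ : Algebra A ℂ := φ.toRingHom.toAlgebra
  have : IsScalarTower ℚ A ℂ := IsScalarTower.of_algebraMap_eq' (φ.comp_algebraMap.symm)
  have : FaithfulSMul A ℂ := (faithfulSMul_iff_algebraMap_injective A ℂ).2 hinj
  let K := FractionRing A
  have : Algebra.IsAlgebraic A ℂ := by
    have h1 := hs.isAlgebraic
    constructor
    intro x
    obtain ⟨p, hp0, hp⟩ := h1.1 x
    have hr : ∀ y : Algebra.adjoin ℚ (range (fun i : s => (i : ℂ))), ∃ a : A, φ a = y := by
      intro y
      have h5 : (y : ℂ) ∈ φ.range := by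
        rw [show φ.range = _ from (Algebra.adjoin_range_eq_range_aeval ℚ (fun i : s => (i : ℂ))).symm]
        exact y.2
      exact h5
    choose g hg using hr
    have : p.map (algebraMap _ ℂ) ∈ Polynomial.lifts φ.toRingHom := by
      rw [Polynomial.lifts_iff_coeff_lifts]
      intro n
      refine ⟨g (p.coeff n), ?_⟩
      rw [Polynomial.coeff_map]
      exact hg _
    obtain ⟨q, hq⟩ := (Polynomial.mem_lifts _).1 this
    refine ⟨q, ?_, ?_⟩
    · rintro rfl
      rw [Polynomial.map_zero] at hq
      exact hp0 ((Polynomial.map_eq_zero_iff (FaithfulSMul.algebraMap_injective _ _)).1 hq.symm)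
    · have e1 : (Polynomial.aeval x) q = (q.map φ.toRingHom).eval x := by
        rw [Polynomial.eval_map]; rfl
      rw [e1, hq, Polynomial.eval_map]
      exact hp
  have : FaithfulSMul A K := inferInstance
  let _ : Algebra K ℂ := FractionRing.liftAlgebra A ℂ
  have : IsScalarTower A K ℂ := FractionRing.isScalarTower_liftAlgebra A ℂ
  have : Algebra.IsAlgebraic K ℂ := (IsFractionRing.comap_isAlgebraic_iff (A := A) (K := K) (C := ℂ)).1 inferInstance
  have : CharZero K := inferInstance
  have : Algebra.IsSeparable K ℂ := inferInstance
  have : Algebra.FormallyEtale K ℂ := Algebra.FormallyEtale.of_isSeparable K ℂ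
  have : Algebra.FormallyEtale A K := Algebra.FormallyEtale.of_isLocalization (nonZeroDivisors A)
  have : Algebra.FormallyEtale A ℂ := Algebra.FormallyEtale.comp A K ℂ
  let e := KaehlerDifferential.tensorKaehlerEquivOfFormallyEtale ℚ A ℂ
  let b := (KaehlerDifferential.mvPolynomialBasis ℚ s).baseChange ℂ
  let i0 : s := ⟨t, hts rfl⟩
  have hne : KaehlerDifferential.D ℚ ℂ t ≠ 0 := by
    intro h0
    have h1 : (algebraMap A ℂ (MvPolynomial.X i0)) = t := by
      change φ (MvPolynomial.X i0) = t
      exact MvPolynomial.aeval_X _ i0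
    have h2 := KaehlerDifferential.tensorKaehlerEquivOfFormallyEtale_symm_D_algebraMap ℚ A ℂ
      (MvPolynomial.X i0)
    rw [h1, h0, map_zero] at h2
    have h3 : b i0 = 0 := by
      rw [h2]
      simp [b, KaehlerDifferential.mvPolynomialBasis_apply]
      rfl
    exact b.ne_zero i0 h3
  obtain ⟨f, hf⟩ : ∃ f : Module.Dual ℂ (Ω[ℂ⁄ℚ]), f (KaehlerDifferential.D ℚ ℂ t) ≠ 0 := by
    by_contra hcon
    push Not at hcon
    exact hne ((Module.forall_dual_apply_eq_zero_iff ℂ _).1 hcon)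
  exact ⟨f.compDer (KaehlerDifferential.D ℚ ℂ), hf⟩


/-- algebraic closure of `ℚ(Y)` in `ℂ` -/
def acl (Y : Set ℂ) : Subfield ℂ :=
  { (Subalgebra.algebraicClosure (Algebra.adjoin ℚ Y) ℂ).toSubring with
    inv_mem' := fun _ hx => IsAlgebraic.inv hx }

lemma mem_acl {Y : Set ℂ} {x : ℂ} : x ∈ acl Y ↔ IsAlgebraic (Algebra.adjoin ℚ Y) x := Iff.rfl

lemma acl_eq (Y : Set ℂ) : (acl Y : Set ℂ) = (AlgebraicIndependent.matroid ℚ ℂ).closure Y := by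
  rw [AlgebraicIndependent.matroid_closure_eq]; rfl

lemma mem_acl' {Y : Set ℂ} {x : ℂ} : x ∈ acl Y ↔ x ∈ (AlgebraicIndependent.matroid ℚ ℂ).closure Y := by
  rw [← acl_eq]; rfl

lemma subset_acl (Y : Set ℂ) : Y ⊆ acl Y := by
  rw [acl_eq]; exact Matroid.subset_closure _ _ (by simp)

lemma acl_le {Y Z : Set ℂ} (h : Y ⊆ acl Z) : acl Y ≤ acl Z := by
  rw [acl_eq] at h
  intro x hx
  rw [mem_acl'] at hx ⊢
  exact Matroid.closure_subset_closure_of_subset_closure h hx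

lemma acl_mono {Y Z : Set ℂ} (h : Y ⊆ Z) : acl Y ≤ acl Z := acl_le (h.trans (subset_acl Z))

lemma mem_acl_of_isAlgebraic {Y : Set ℂ} {x : ℂ} (h : IsAlgebraic (acl Y) x) : x ∈ acl Y := by
  have : IsAlgebraic (Subalgebra.algebraicClosure (Algebra.adjoin ℚ Y) ℂ) x := by
    obtain ⟨p, hp, hp'⟩ := h
    exact ⟨p, hp, hp'⟩
  exact this.restrictScalars (Algebra.adjoin ℚ Y)

lemma mem_acl_of_root {Y : Set ℂ} {x : ℂ} (p : Polynomial ℂ) (hp : p ≠ 0)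
    (hc : ∀ n, p.coeff n ∈ acl Y) (hx : p.eval x = 0) : x ∈ acl Y := by
  apply mem_acl_of_isAlgebraic
  have : p ∈ Polynomial.lifts (algebraMap (acl Y) ℂ) := by
    rw [Polynomial.lifts_iff_coeff_lifts]
    intro n
    exact ⟨⟨_, hc n⟩, rfl⟩
  obtain ⟨q, hq⟩ := (Polynomial.mem_lifts _).1 this
  refine ⟨q, ?_, ?_⟩
  · rintro rfl
    exact hp (by simpa using hq.symm)
  · rw [← hx, ← hq, Polynomial.eval_map]; rfl

lemma isAlgebraic_mem_acl {Y : Set ℂ} {x : ℂ} (h : IsAlgebraic ℚ x) : x ∈ acl Y := by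
  rw [mem_acl]
  exact h.extendScalars (FaithfulSMul.algebraMap_injective _ _)

lemma dep_acl {ι : Type*} {Y : Set ℂ} (x : ι → ℂ) (h : ¬ AlgebraicIndependent (acl Y) x) :
    ∃ i, x i ∈ acl (Y ∪ x '' {i}ᶜ) := by
  by_contra hcon
  push Not at hcon
  apply h
  refine algebraicIndependent_of_finite_type' (FaithfulSMul.algebraMap_injective _ _) ?_
  intro t _ _ i hit hi
  apply hcon i
  have hle : ((Algebra.adjoin (acl Y) (x '' t) : Subalgebra (acl Y) ℂ) : Set ℂ) ⊆ acl (Y ∪ x '' {i}ᶜ) := by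
    let S : Subalgebra (acl Y) ℂ := { (acl (Y ∪ x '' {i}ᶜ)).toSubring with
      algebraMap_mem' := fun r => acl_mono subset_union_left r.2 }
    have : Algebra.adjoin (acl Y) (x '' t) ≤ S := Algebra.adjoin_le
      ((image_mono (by intro j hj; rintro rfl; exact hit hj)).trans (subset_union_right.trans (subset_acl _)))
    exact this
  obtain ⟨p, hp, hp'⟩ := hi
  apply mem_acl_of_root (p.map (algebraMap _ ℂ))
  · intro h0
    exact hp ((Polynomial.map_eq_zero_iff (FaithfulSMul.algebraMap_injective _ _)).1 h0)
  · intro n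
    rw [Polynomial.coeff_map]
    exact hle (p.coeff n).2
  · rw [Polynomial.eval_map]
    exact hp'

lemma scl (hSC : SchanuelConjecture) {ι : Type*} [Fintype ι] (lam : ι → ℂ)
    (hl : LinearIndependent ℚ lam) (Y : Finset ℂ) (h1 : ∀ i, lam i ∈ acl Y)
    (h2 : ∀ i, Complex.exp (lam i) ∈ acl Y) : Fintype.card ι ≤ Y.card := by
  let e := Fintype.equivFin ι
  have := hSC (Fintype.card ι) (lam ∘ e.symm) (hl.comp _ e.symm.injective)
  have h3 : trdegQ (range (lam ∘ e.symm) ∪ range fun i => Complex.exp ((lam ∘ e.symm) i)) ≤ (Y.card : Cardinal) := by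
    apply ciSup_le'
    rintro ⟨t, ht, hti⟩
    simp only
    have hI : (AlgebraicIndependent.matroid ℚ ℂ).Indep (t : Set ℂ) := hti
    have h4 : (t : Set ℂ) ⊆ (AlgebraicIndependent.matroid ℚ ℂ).closure Y := by
      rw [← acl_eq]
      refine ht.trans ?_
      rintro _ (⟨i, rfl⟩ | ⟨i, rfl⟩)
      · exact h1 _
      · exact h2 _
    have h5 := hI.encard_le_eRk_of_subset h4
    rw [Matroid.eRk_closure_eq] at h5
    have h6 := h5.trans (Matroid.eRk_le_encard _ _)
    rw [Set.encard_coe_eq_coe_finsetCard, Set.encard_coe_eq_coe_finsetCard] at h6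
    exact_mod_cast h6
  exact_mod_cast this.trans h3


lemma isExpPoly_sum {ι : Type*} (s : Finset ι) (c e : ι → ℂ) :
    IsExpPoly (fun z => ∑ i ∈ s, c i * Complex.exp (e i * z)) := by
  refine ⟨s.card, fun i => c (s.equivFin.symm i), fun i => e (s.equivFin.symm i), fun z => ?_⟩
  show ∑ i ∈ s, c i * Complex.exp (e i * z) = _
  rw [← Finset.sum_coe_sort s (fun i => c i * Complex.exp (e i * z))]
  exact (Equiv.sum_comp s.equivFin.symm (fun i : s => c i * Complex.exp (e i * z))).symm

lemma isExpPoly_fintype {ι : Type*} [Fintype ι] (c e : ι → ℂ) :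
    IsExpPoly (fun z => ∑ i, c i * Complex.exp (e i * z)) := isExpPoly_sum _ _ _

lemma isExpPoly_exp (c e : ℂ) : IsExpPoly (fun z => c * Complex.exp (e * z)) := by
  have := isExpPoly_fintype (fun _ : Unit => c) (fun _ : Unit => e)
  simpa using this

lemma isExpPoly_const (c : ℂ) : IsExpPoly (fun _ => c) := by
  simpa using isExpPoly_exp c 0

lemma isExpPoly_add {f g : ℂ → ℂ} (hf : IsExpPoly f) (hg : IsExpPoly g) : IsExpPoly (f + g) := by
  obtain ⟨N, l, m, h⟩ := hf
  obtain ⟨N', l', m', h'⟩ := hg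
  have := isExpPoly_fintype (Sum.elim l l') (Sum.elim m m')
  convert this using 1
  funext z
  simp [h, h']

lemma isExpPoly_mul {f g : ℂ → ℂ} (hf : IsExpPoly f) (hg : IsExpPoly g) : IsExpPoly (f * g) := by
  obtain ⟨N, l, m, h⟩ := hf
  obtain ⟨N', l', m', h'⟩ := hg
  have := isExpPoly_fintype (fun x : Fin N × Fin N' => l x.1 * l' x.2) (fun x => m x.1 + m' x.2)
  convert this using 1
  funext z
  simp only [Pi.mul_apply, h, h', Finset.sum_mul_sum, Fintype.sum_prod_type, add_mul, Complex.exp_add]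
  refine Finset.sum_congr rfl fun i _ => Finset.sum_congr rfl fun j _ => by ring

lemma isExpPoly_fsum {ι : Type*} (s : Finset ι) (F : ι → ℂ → ℂ) (h : ∀ i ∈ s, IsExpPoly (F i)) :
    IsExpPoly (∑ i ∈ s, F i) := by
  classical
  induction s using Finset.induction_on with
  | empty => exact isExpPoly_const 0
  | insert a s ha ih =>
    rw [Finset.sum_insert ha]
    exact isExpPoly_add (h _ (by simp)) (ih fun i hi => h i (by simp [hi]))

lemma isExpPoly_canon {f : ℂ → ℂ} (hf : IsExpPoly f) : ∃ (I : Finset ℂ) (c : ℂ → ℂ),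
    (∀ b ∈ I, c b ≠ 0) ∧ ∀ z, f z = ∑ b ∈ I, c b * Complex.exp (b * z) := by
  classical
  obtain ⟨N, l, m, h⟩ := hf
  let c : ℂ → ℂ := fun b => ∑ i with m i = b, l i
  refine ⟨(Finset.univ.image m).filter (fun b => c b ≠ 0), c, fun b hb => (Finset.mem_filter.1 hb).2, ?_⟩
  intro z
  rw [h, Finset.sum_filter_of_ne (p := fun b => c b ≠ 0) (fun x _ hx hc => hx (by rw [hc, zero_mul]))]
  rw [← Finset.sum_fiberwise_of_maps_to (s := Finset.univ) (t := Finset.univ.image m) (g := m) (fun i hi => by simp)]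
  refine Finset.sum_congr rfl fun b _ => ?_
  rw [Finset.sum_mul]
  refine Finset.sum_congr rfl fun i hi => ?_
  rw [(Finset.mem_filter.1 hi).2]

lemma eunit_ne_zero {f : ℂ → ℂ} (hf : EUnit f) (z : ℂ) : f z ≠ 0 := by
  obtain ⟨_, g, _, h⟩ := hf
  intro h0
  have := congrFun h z
  simp [h0] at this

lemma edvd_sum {ι : Type*} (s : Finset ι) (h : ℂ → ℂ) (F : ι → ℂ → ℂ) (hF : ∀ i ∈ s, EDvd h (F i)) :
    EDvd h (∑ i ∈ s, F i) := by
  classical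
  induction s using Finset.induction_on with
  | empty => exact ⟨0, isExpPoly_const 0, by simp⟩
  | insert a s ha ih =>
    obtain ⟨q, hq, e⟩ := hF a (by simp)
    obtain ⟨q', hq', e'⟩ := ih fun i hi => hF i (by simp [hi])
    exact ⟨q + q', isExpPoly_add hq hq', by rw [Finset.sum_insert ha, mul_add, ← e, ← e']⟩

lemma edvd_mul {h f g : ℂ → ℂ} (hf : EDvd h f) (hg : IsExpPoly g) : EDvd h (f * g) := by
  obtain ⟨q, hq, e⟩ := hf
  exact ⟨q * g, isExpPoly_mul hq hg, by rw [e, mul_assoc]⟩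

lemma isExpPoly_exp' (θ z₀ : ℂ) : IsExpPoly (fun z => Complex.exp (θ * (z - z₀))) := by
  convert isExpPoly_exp (Complex.exp (-θ * z₀)) θ using 2 with z
  rw [← Complex.exp_add]; ring_nf

lemma edvd_pow (θ z₀ : ℂ) (n : ℤ) : EDvd (fun z => 1 - Complex.exp (θ * (z - z₀)))
    (fun z => Complex.exp (n * θ * (z - z₀)) - 1) := by
  have key : ∀ n : ℕ, EDvd (fun z => 1 - Complex.exp (θ * (z - z₀)))
    (fun z => Complex.exp (n * θ * (z - z₀)) - 1) := by
    intro n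
    refine ⟨(∑ k ∈ Finset.range n, fun z => Complex.exp ((k * θ) * (z - z₀))) * (fun _ => -1),
      isExpPoly_mul (isExpPoly_fsum _ _ fun k _ => isExpPoly_exp' _ _) (isExpPoly_const _), ?_⟩
    funext z
    have e : ∀ k : ℕ, Complex.exp ((k * θ) * (z - z₀)) = Complex.exp (θ * (z - z₀)) ^ k := by
      intro k; rw [← Complex.exp_nat_mul]; ring_nf
    simp only [Pi.mul_apply, Finset.sum_apply, e]
    have := mul_geom_sum (Complex.exp (θ * (z - z₀))) n
    linear_combination -this
  obtain ⟨m, rfl | rfl⟩ := n.eq_nat_or_neg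
  · exact_mod_cast key m
  · have := edvd_mul (key m) (isExpPoly_mul (isExpPoly_exp' (-m * θ) z₀) (isExpPoly_const (-1)))
    convert this using 1
    funext z
    simp only [Pi.mul_apply]
    push_cast
    have : Complex.exp (m * θ * (z - z₀)) * Complex.exp (-m * θ * (z - z₀)) = 1 := by
      rw [← Complex.exp_add]; simp
    linear_combination this

lemma final_step {f : ℂ → ℂ} (hf : EIrreducible f) {z₀ ω : ℂ} (hω : ω ≠ 0)
    (h : ∀ m : ℕ, f (z₀ + m * ω) = 0) : False := by
  classical
  obtain ⟨I, c, -, hc⟩ := isExpPoly_canon hf.1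
  let d : ℂ → ℂ := fun b => c b * Complex.exp (b * z₀)
  have hgrp : ∀ α, ∑ b ∈ I with Complex.exp (b * ω) = α, d b = 0 := by
    intro α
    have := char_group (G := Multiplicative ℕ) I (fun b => powersHom ℂ (Complex.exp (b * ω))) d
      (by
        intro g
        rw [← h g.toAdd, hc]
        refine Finset.sum_congr rfl fun b _ => ?_
        rw [powersHom_apply, ← Complex.exp_nat_mul]
        simp only [d]
        rw [mul_assoc, ← Complex.exp_add]; ring_nf)
      (fun χ => χ (Multiplicative.ofAdd 1) = α)
    simpa using this
  let R : ℂ → ℂ := fun b => Complex.log (Complex.exp (b * ω)) / ω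
  let θ := 2 * Real.pi * Complex.I / ω
  have hR : ∀ b, ∃ n : ℤ, b - R b = n * θ := by
    intro b
    have : Complex.exp (b * ω) = Complex.exp (R b * ω) := by
      simp only [R]
      rw [div_mul_cancel₀ _ hω, Complex.exp_log (Complex.exp_ne_zero _)]
    obtain ⟨n, hn⟩ := Complex.exp_eq_exp_iff_exists_int.1 this
    refine ⟨n, ?_⟩
    simp only [θ]
    field_simp
    linear_combination hn
  have hdvd : EDvd (fun z => 1 - Complex.exp (θ * (z - z₀))) f := by
    have : f = ∑ b ∈ I, (fun z => Complex.exp ((b - R b) * (z - z₀)) - 1) *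
        ((fun z => Complex.exp (R b * (z - z₀))) * (fun _ => d b)) := by
      funext z
      simp only [Finset.sum_apply, Pi.mul_apply]
      have h0 : ∑ b ∈ I, Complex.exp (R b * (z - z₀)) * d b = 0 := by
        rw [← Finset.sum_fiberwise_of_maps_to (s := I) (t := I.image fun b => Complex.exp (b * ω))
          (g := fun b => Complex.exp (b * ω)) (fun i hi => Finset.mem_image_of_mem _ hi)]
        apply Finset.sum_eq_zero
        intro α _
        have e : ∑ b ∈ I with Complex.exp (b * ω) = α, Complex.exp (R b * (z - z₀)) * d b =
          Complex.exp ((Complex.log α / ω) * (z - z₀)) * ∑ b ∈ I with Complex.exp (b * ω) = α, d b := by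
          rw [Finset.mul_sum]
          refine Finset.sum_congr rfl fun b hb => ?_
          simp only [R, (Finset.mem_filter.1 hb).2]
        rw [e, hgrp, mul_zero]
      rw [hc, ← add_zero (∑ b ∈ I, (Complex.exp ((b - R b) * (z - z₀)) - 1) * (Complex.exp (R b * (z - z₀)) * d b)), ← h0,
        ← Finset.sum_add_distrib]
      refine Finset.sum_congr rfl fun b hb => ?_
      have e1 : (Complex.exp ((b - R b) * (z - z₀))) * Complex.exp (R b * (z - z₀)) * Complex.exp (b * z₀) = Complex.exp (b * z) := by
        rw [← Complex.exp_add, ← Complex.exp_add]; ring_nf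
      simp only [d]
      rw [← e1]; ring
    rw [this]
    apply edvd_sum
    intro b _
    apply edvd_mul _ (isExpPoly_mul (isExpPoly_exp' _ _) (isExpPoly_const _))
    obtain ⟨n, hn⟩ := hR b
    rw [hn]
    exact edvd_pow _ _ _
  obtain ⟨q, hq, e⟩ := hdvd
  let s : ℂ → ℂ := fun z => Complex.exp (θ / 2 * (z - z₀))
  have hs : IsExpPoly s := isExpPoly_exp' _ _
  have h1 : IsExpPoly ((fun _ => 1) + (fun _ => -1) * s) :=
    isExpPoly_add (isExpPoly_const _) (isExpPoly_mul (isExpPoly_const _) hs)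
  have h2 : IsExpPoly ((fun _ => 1) + s) := isExpPoly_add (isExpPoly_const _) hs
  have e2 : f = ((fun _ => 1) + (fun _ => -1) * s) * (((fun _ => 1) + s) * q) := by
    rw [e]
    funext z
    have : Complex.exp (θ * (z - z₀)) = s z * s z := by
      simp only [s]; rw [← Complex.exp_add]; ring_nf
    simp only [Pi.mul_apply, Pi.add_apply, this]; ring
  rcases hf.2.2.2 _ _ h1 (isExpPoly_mul h2 hq) e2 with hu | hu
  · apply eunit_ne_zero hu z₀
    simp [s]
  · apply eunit_ne_zero hu (z₀ + ω)
    simp only [Pi.mul_apply, Pi.add_apply, s]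
    have : θ / 2 * (z₀ + ω - z₀) = Real.pi * Complex.I := by
      simp only [θ]; field_simp; ring
    rw [this, Complex.exp_pi_mul_I]; ring


lemma bezout_poly {R L : Type*} [CommRing R] [IsDomain R] [UniqueFactorizationMonoid R] [Field L]
    (P Q : Polynomial R) (hP : Irreducible P) (hPQ : ¬ P ∣ Q) (ψ : R →+* L)
    (hψ : Function.Injective ψ) (x : L) (h1 : P.eval₂ ψ x = 0) (h2 : Q.eval₂ ψ x = 0) : False := by
  classical
  by_cases hd : P.natDegree = 0
  · rw [Polynomial.eq_C_of_natDegree_eq_zero hd, Polynomial.eval₂_C] at h1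
    have : P.coeff 0 = 0 := hψ (by rw [h1, map_zero])
    apply hP.ne_zero
    rw [Polynomial.eq_C_of_natDegree_eq_zero hd, this, Polynomial.C_0]
  have hprim := hP.isPrimitive hd
  let K := FractionRing R
  have hirr := (hprim.irreducible_iff_irreducible_map_fraction_map (K := K)).1 hP
  have hnd : ¬ P.map (algebraMap R K) ∣ Q.map (algebraMap R K) := fun h =>
    hPQ ((hprim.dvd_iff_fraction_map_dvd_fraction_map K).2 h)
  have hcop : IsCoprime (P.map (algebraMap R K)) (Q.map (algebraMap R K)) :=
    (hirr.coprime_iff_not_dvd).2 hnd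
  obtain ⟨a, b, hab⟩ := hcop
  let Ψ : K →+* L := IsFractionRing.lift hψ
  have hΨ : Ψ.comp (algebraMap R K) = ψ := by
    ext r; exact IsFractionRing.lift_algebraMap hψ r
  have := congrArg (Polynomial.eval₂ Ψ x) hab
  rw [Polynomial.eval₂_add, Polynomial.eval₂_mul, Polynomial.eval₂_mul, Polynomial.eval₂_map,
    Polynomial.eval₂_map, hΨ, h1, h2] at this
  simp at this

lemma bezout_mv {σ K L : Type*} [Field K] [Field L] [Algebra K L]
    (P Q : MvPolynomial σ K) (hP : Irreducible P) (hPQ : ¬ P ∣ Q) (x : σ → L)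
    (h1 : MvPolynomial.aeval x P = 0) (h2 : MvPolynomial.aeval x Q = 0) (i : σ) :
    ¬ AlgebraicIndependent K (fun j : {j // j ≠ i} => x j) := by
  classical
  intro hind
  let e := ((MvPolynomial.renameEquiv K (Equiv.optionSubtypeNe i).symm).trans
    (MvPolynomial.optionEquivLeft K {j // j ≠ i}))
  let ψ : MvPolynomial {j // j ≠ i} K →+* L := (MvPolynomial.aeval (fun j : {j // j ≠ i} => x j)).toRingHom
  have key : ∀ F, (e F).eval₂ ψ (x i) = MvPolynomial.aeval x F := by
    intro F
    induction F using MvPolynomial.induction_on with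
    | C a => simp [e, ψ]
    | add p q hp hq => rw [map_add, Polynomial.eval₂_add, hp, hq, map_add]
    | mul_X p j hp =>
      rw [map_mul, Polynomial.eval₂_mul, hp, map_mul]
      congr 1
      by_cases hj : j = i
      · subst hj; simp [e, ψ]
      · simp [e, ψ, Equiv.optionSubtypeNe_symm_of_ne hj]
  refine bezout_poly (e P) (e Q) ((MulEquiv.irreducible_iff e).2 hP) (fun h => hPQ ?_) ψ hind (x i) ?_ ?_
  · simpa using (map_dvd_iff e).1 h
  · rw [key, h1]
  · rw [key, h2]


lemma exists_int_basis (J : Finset ℂ) : ∃ (n : ℕ) (β : Fin n → ℂ), LinearIndependent ℚ β ∧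
    ∀ b ∈ J, ∃ m : Fin n → ℤ, b = ∑ i, (m i : ℂ) * β i := by
  let A : Submodule ℤ ℂ := Submodule.span ℤ (J : Set ℂ)
  have : Module.Finite ℤ A := Module.Finite.span_of_finite ℤ J.finite_toSet
  have : Module.Free ℤ A := inferInstance
  let B := Module.finBasis ℤ A
  refine ⟨Module.finrank ℤ A, fun i => (B i : ℂ), ?_, ?_⟩
  · rw [← LinearIndependent.iff_fractionRing ℤ ℚ]
    exact B.linearIndependent.map' A.subtype (by simp)
  · intro b hb
    let b' : A := ⟨b, Submodule.subset_span hb⟩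
    refine ⟨fun i => B.repr b' i, ?_⟩
    have := congrArg (A.subtype) (B.sum_repr b')
    rw [map_sum] at this
    simp only [map_smul, Submodule.subtype_apply, zsmul_eq_mul] at this
    exact this.symm

section
variable {K : Subfield ℂ} {n : ℕ} (β : Fin n → ℂ)

/-- evaluation of a polynomial at exponentials -/
def Phi (P : MvPolynomial (Fin n) K) : ℂ → ℂ :=
  fun z => MvPolynomial.aeval (fun i => Complex.exp (β i * z)) P

lemma Phi_mul (P Q : MvPolynomial (Fin n) K) : Phi β (P * Q) = Phi β P * Phi β Q := by
  funext z; simp [Phi]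

lemma Phi_one : Phi β (1 : MvPolynomial (Fin n) K) = 1 := by
  funext z; simp [Phi]

lemma Phi_exp (P : MvPolynomial (Fin n) K) : IsExpPoly (Phi β P) := by
  induction P using MvPolynomial.induction_on with
  | C a =>
    convert isExpPoly_const (a : ℂ) using 1
    funext z; simp [Phi]; rfl
  | add p q hp hq =>
    convert isExpPoly_add hp hq using 1
    funext z; simp [Phi]
  | mul_X p i hp =>
    convert isExpPoly_mul hp (isExpPoly_exp 1 (β i)) using 1
    funext z; simp [Phi]

lemma Phi_unit (P : MvPolynomial (Fin n) K) (h : IsUnit P) : EUnit (Phi β P) := by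
  obtain ⟨Q, hQ⟩ := h.exists_right_inv
  exact ⟨Phi_exp β P, Phi β Q, Phi_exp β Q, by rw [← Phi_mul, hQ, Phi_one]⟩

lemma eunit_mul {u v : ℂ → ℂ} (hu : EUnit u) (hv : EUnit v) : EUnit (u * v) := by
  obtain ⟨hu, u', hu', e⟩ := hu
  obtain ⟨hv, v', hv', e'⟩ := hv
  exact ⟨isExpPoly_mul hu hv, u' * v', isExpPoly_mul hu' hv', by rw [mul_mul_mul_comm, e, e', mul_one]⟩

lemma Phi_irred {f : ℂ → ℂ} (hf : EIrreducible f) (P : MvPolynomial (Fin n) K) :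
    ∀ u, EUnit u → f = u * Phi β P → ∃ p : MvPolynomial (Fin n) K, Irreducible p ∧ ∃ u', EUnit u' ∧ f = u' * Phi β p := by
  induction P using WfDvdMonoid.induction_on_irreducible with
  | zero =>
    intro u _ h
    exact absurd (by rw [h]; funext z; simp [Phi]) hf.2.1
  | unit P hP =>
    intro u hu h
    exact absurd (h ▸ eunit_mul hu (Phi_unit β P hP)) hf.2.2.1
  | mul a p ha hp ih =>
    intro u hu h
    rw [Phi_mul, ← mul_assoc] at h
    rcases hf.2.2.2 _ _ (isExpPoly_mul hu.1 (Phi_exp β p)) (Phi_exp β a) h with h1 | h1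
    · exact ih _ h1 h
    · exact ⟨p, hp, _, eunit_mul hu h1, by rw [h]; ring⟩

lemma exists_Phi {g : ℂ → ℂ} (J : Finset ℂ) (c : ℂ → ℂ) (hc : ∀ b ∈ J, c b ∈ K)
    (hg : ∀ z, g z = ∑ b ∈ J, c b * Complex.exp (b * z))
    (hJ : ∀ b ∈ J, ∃ m : Fin n → ℤ, b = ∑ i, (m i : ℂ) * β i) :
    ∃ P : MvPolynomial (Fin n) K, ∃ μ : ℂ, ∀ z, g z = Complex.exp (μ * z) * Phi β P z := by
  classical
  choose! m hm using hJ
  obtain ⟨N, hN⟩ : ∃ N : ℕ, ∀ b ∈ J, ∀ i, 0 ≤ m b i + N := by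
    refine ⟨∑ b ∈ J, ∑ i, (m b i).natAbs, fun b hb i => ?_⟩
    have h1 : (m b i).natAbs ≤ ∑ i, (m b i).natAbs :=
      Finset.single_le_sum (f := fun i => (m b i).natAbs) (fun _ _ => Nat.zero_le _) (Finset.mem_univ i)
    have h2 : ∑ i, (m b i).natAbs ≤ ∑ b ∈ J, ∑ i, (m b i).natAbs :=
      Finset.single_le_sum (f := fun b => ∑ i, (m b i).natAbs) (fun _ _ => Nat.zero_le _) hb
    generalize ∑ b ∈ J, ∑ i, (m b i).natAbs = M at *
    omega
  let cK : ℂ → K := fun b => if h : c b ∈ K then ⟨c b, h⟩ else 0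
  refine ⟨∑ b ∈ J, MvPolynomial.C (cK b) * ∏ i, MvPolynomial.X i ^ (m b i + N).toNat, -∑ i, (N : ℂ) * β i, fun z => ?_⟩
  rw [hg]
  simp only [Phi, map_sum, map_mul, map_prod, map_pow, MvPolynomial.aeval_X, MvPolynomial.aeval_C]
  rw [Finset.mul_sum]
  refine Finset.sum_congr rfl fun b hb => ?_
  have e1 : algebraMap K ℂ (cK b) = c b := by
    simp only [cK, dif_pos (hc b hb)]; rfl
  rw [e1, mul_left_comm]
  congr 1
  have e2 : ∀ i, Complex.exp (β i * z) ^ (m b i + N).toNat = Complex.exp ((m b i + N : ℂ) * β i * z) := by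
    intro i
    rw [← Complex.exp_nat_mul]
    have : (((m b i + N).toNat : ℤ) : ℂ) = ((m b i + N : ℤ) : ℂ) := by
      rw [Int.toNat_of_nonneg (hN b hb i)]
    have : ((m b i + N).toNat : ℂ) = (m b i + N : ℂ) := by exact_mod_cast this
    rw [this]; ring_nf
  simp only [e2]
  rw [← Complex.exp_sum, ← Complex.exp_add]
  congr 1
  rw [← Finset.sum_mul, ← add_mul]
  congr 1
  rw [hm b hb, ← Finset.sum_neg_distrib, ← Finset.sum_add_distrib]
  refine Finset.sum_congr rfl fun i _ => ?_
  rw [← hm b hb]; ring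
end

lemma two_dep {C : Set ℂ} {n : ℕ} (P Q : MvPolynomial (Fin n) (acl C)) (hP : Irreducible P)
    (hPQ : ¬ P ∣ Q) (x : Fin n → ℂ)
    (h1 : MvPolynomial.aeval x P = 0) (h2 : MvPolynomial.aeval x Q = 0) :
    ∃ s : Finset (Fin n), s.card + 2 ≤ n ∧ ∀ i, x i ∈ acl (C ∪ x '' s) := by
  classical
  have hn : ¬ AlgebraicIndependent (acl C) x := fun h => hP.ne_zero (h (by rw [h1, map_zero]))
  obtain ⟨i, hi⟩ := dep_acl x hn
  obtain ⟨⟨j, hji⟩, hj⟩ := dep_acl _ (bezout_mv P Q hP hPQ x h1 h2 i)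
  refine ⟨Finset.univ \ {i, j}, ?_, ?_⟩
  · rw [Finset.card_sdiff_of_subset (Finset.subset_univ _), Finset.card_pair hji.symm, Finset.card_univ, Fintype.card_fin]
    have : ({i, j} : Finset (Fin n)).card ≤ (Finset.univ : Finset (Fin n)).card := Finset.card_le_card (Finset.subset_univ _)
    rw [Finset.card_pair hji.symm, Finset.card_univ, Fintype.card_fin] at this
    omega
  · have hj' : x j ∈ acl (C ∪ x '' (Finset.univ \ {i, j} : Finset (Fin n))) := by
      refine acl_mono (union_subset_union_right _ ?_) hj
      rintro _ ⟨⟨k, hk⟩, hk', rfl⟩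
      refine ⟨k, ?_, rfl⟩
      simp only [mem_compl_iff, mem_singleton_iff, Subtype.mk.injEq] at hk'
      simp [hk, hk']
    have hother : ∀ k, k ≠ i → x k ∈ acl (C ∪ x '' (Finset.univ \ {i, j} : Finset (Fin n))) := by
      intro k hk
      by_cases hkj : k = j
      · rw [hkj]; exact hj'
      · exact subset_acl _ (Or.inr ⟨k, by simp [hk, hkj], rfl⟩)
    intro k
    by_cases hk : k = i
    · rw [hk]
      refine acl_le ?_ hi
      rintro y (hy | ⟨l, hl, rfl⟩)
      · exact subset_acl _ (Or.inl hy)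
      · exact hother l hl
    · exact hother k hk


lemma count_indep (hSC : SchanuelConjecture) (C : Finset ℂ) {n : ℕ} (β : Fin n → ℂ)
    (hβ : LinearIndependent ℚ β) (hβC : ∀ i, β i ∈ C) {ι : Type*} [Fintype ι] (z : ι → ℂ)
    (hz : LinearIndependent (acl (C : Set ℂ)) z)
    (hd : ∀ k, ∃ s : Finset (Fin n), s.card + 2 ≤ n ∧
      ∀ i, Complex.exp (β i * z k) ∈ acl (C ∪ (fun i => Complex.exp (β i * z k)) '' s)) :
    Fintype.card ι ≤ C.card := by
  classical
  choose s hs hs' using hd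
  let βK : Fin n → acl (C : Set ℂ) := fun i => ⟨β i, subset_acl _ (hβC i)⟩
  have hβK : LinearIndependent ℚ βK := by
    have : LinearIndependent ℚ ((Algebra.linearMap (acl (C : Set ℂ)) ℂ).restrictScalars ℚ ∘ βK) := hβ
    exact LinearIndependent.of_comp _ this
  have hli := linearIndependent_smul hβK hz
  let Y : Finset ℂ := C ∪ Finset.univ.image z ∪
    Finset.univ.biUnion (fun k => (s k).image (fun i => Complex.exp (β i * z k)))
  have hCY : (C : Set ℂ) ⊆ Y := by
    intro x hx; simp only [Y, Finset.coe_union]; exact Or.inl (Or.inl hx)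
  have := scl hSC _ hli Y (by
    rintro ⟨i, k⟩
    refine Subfield.mul_mem _ (subset_acl _ (hCY (hβC i))) (subset_acl _ ?_)
    simp only [Y, Finset.coe_union]
    exact Or.inl (Or.inr (by simp))) (by
    rintro ⟨i, k⟩
    refine acl_mono ?_ (hs' k i)
    refine union_subset hCY ?_
    rintro _ ⟨j, hj, rfl⟩
    simp only [Y, Finset.coe_union]
    refine Or.inr ?_
    simp only [Finset.coe_biUnion, mem_iUnion]
    exact ⟨k, by simp, by simp only [Finset.coe_image]; exact ⟨j, hj, rfl⟩⟩)
  rw [Fintype.card_prod, Fintype.card_fin] at this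
  have h1 : Y.card ≤ C.card + Fintype.card ι + ∑ k : ι, (s k).card := by
    refine (Finset.card_union_le _ _).trans (add_le_add ((Finset.card_union_le _ _).trans (add_le_add le_rfl Finset.card_image_le)) ?_)
    exact Finset.card_biUnion_le.trans (Finset.sum_le_sum fun k _ => Finset.card_image_le)
  have h2 : ∑ k : ι, (s k).card + 2 * Fintype.card ι ≤ n * Fintype.card ι := by
    have : ∑ k : ι, ((s k).card + 2) ≤ ∑ _k : ι, n := Finset.sum_le_sum fun k _ => hs k
    simpa [Finset.sum_add_distrib, mul_comm] using this
  omega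

lemma phase1 (hSC : SchanuelConjecture) {f g : ℂ → ℂ} (hg : IsExpPoly g) (hirr : EIrreducible f)
    (hnd : ¬ EDvd f g) (I : Finset ℂ) (c : ℂ → ℂ)
    (hf : ∀ z, f z = ∑ b ∈ I, c b * Complex.exp (b * z)) :
    ∃ C' : Finset ℂ, (∀ b ∈ I, b ∈ acl (C' : Set ℂ) ∧ c b ∈ acl (C' : Set ℂ)) ∧
      ∀ z, f z = 0 → g z = 0 → z ∈ acl (C' : Set ℂ) := by
  classical
  obtain ⟨J, c', -, hg'⟩ := isExpPoly_canon hg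
  obtain ⟨n, β, hβ, hβJ⟩ := exists_int_basis (I ∪ J)
  let C : Finset ℂ := (I ∪ I.image c) ∪ (J.image c' ∪ Finset.univ.image β)
  have hI : ∀ b ∈ I, b ∈ C := fun b hb => by simp [C, hb]
  have hcI : ∀ b ∈ I, c b ∈ C := fun b hb => by
    simp only [C, Finset.mem_union]; exact Or.inl (Or.inr (Finset.mem_image_of_mem _ hb))
  have hcJ : ∀ b ∈ J, c' b ∈ C := fun b hb => by
    simp only [C, Finset.mem_union]; exact Or.inr (Or.inl (Finset.mem_image_of_mem _ hb))
  have hβC : ∀ i, β i ∈ C := fun i => by simp [C]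
  obtain ⟨P, μ, hP⟩ := exists_Phi (K := acl (C : Set ℂ)) β I c (fun b hb => subset_acl _ (hcI b hb)) hf
    (fun b hb => hβJ b (by simp [hb]))
  obtain ⟨Q, ν, hQ⟩ := exists_Phi (K := acl (C : Set ℂ)) β J c' (fun b hb => subset_acl _ (hcJ b hb)) hg'
    (fun b hb => hβJ b (by simp [hb]))
  have hexpu : ∀ μ : ℂ, EUnit (fun z => Complex.exp (μ * z)) := fun μ =>
    ⟨by simpa using isExpPoly_exp 1 μ, fun z => Complex.exp (-μ * z), by simpa using isExpPoly_exp 1 (-μ), by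
      funext z; simp only [Pi.mul_apply, Pi.one_apply]; rw [← Complex.exp_add]; simp⟩
  obtain ⟨p, hp, u, hu, hfp⟩ := Phi_irred β hirr P _ (hexpu μ) (funext hP)
  have hpQ : ¬ p ∣ Q := by
    rintro ⟨r, rfl⟩
    apply hnd
    obtain ⟨hu1, u', hu', huu⟩ := hu
    refine ⟨u' * Phi β r * (fun z => Complex.exp (ν * z)),
      isExpPoly_mul (isExpPoly_mul hu' (Phi_exp β r)) (hexpu ν).1, ?_⟩
    have e : g = (fun z => Complex.exp (ν * z)) * Phi β (p * r) := funext hQ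
    rw [e, Phi_mul, hfp]
    calc _ = (1 : ℂ → ℂ) * ((fun z => Complex.exp (ν * z)) * (Phi β p * Phi β r)) := by rw [one_mul]
      _ = _ := by rw [← huu]; ring
  let S : Set ℂ := {z | f z = 0 ∧ g z = 0}
  obtain ⟨b, hbS, hspan, hbli⟩ := exists_linearIndependent (acl (C : Set ℂ)) S
  have hdep : ∀ z ∈ S, ∃ s : Finset (Fin n), s.card + 2 ≤ n ∧
      ∀ i, Complex.exp (β i * z) ∈ acl (C ∪ (fun i => Complex.exp (β i * z)) '' s) := by
    rintro z ⟨h1, h2⟩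
    refine two_dep p Q hp hpQ _ ?_ ?_
    · rw [hfp] at h1
      exact (mul_eq_zero.1 h1).resolve_left (eunit_ne_zero hu z)
    · rw [hQ] at h2
      exact (mul_eq_zero.1 h2).resolve_left (Complex.exp_ne_zero _)
  have hfin : b.Finite := by
    by_contra hinf
    obtain ⟨t, htb, htc⟩ := (show b.Infinite from hinf).exists_subset_card_eq (C.card + 1)
    have hli : LinearIndependent (acl (C : Set ℂ)) (fun x : t => (x : ℂ)) :=
      hbli.comp (fun x : t => (⟨x, htb x.2⟩ : b)) (fun x y h => by
        exact Subtype.ext (Subtype.mk.inj h))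
    have := count_indep hSC C β hβ hβC _ hli (fun k => hdep _ (hbS (htb k.2)))
    rw [Fintype.card_coe] at this
    omega
  refine ⟨C ∪ hfin.toFinset, fun x hx => ⟨subset_acl _ (by simp [hI x hx]), subset_acl _ (by simp [hcI x hx])⟩, ?_⟩
  intro z h1 h2
  have hz : z ∈ Submodule.span (acl (C : Set ℂ)) b := by
    rw [hspan]; exact Submodule.subset_span ⟨h1, h2⟩
  clear h1 h2
  induction hz using Submodule.span_induction with
  | mem x hx => exact subset_acl _ (by simp [hx])
  | zero => exact Subfield.zero_mem _
  | add x y _ _ hx hy => exact Subfield.add_mem _ hx hy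
  | smul a x _ hx => exact Subfield.mul_mem _ (acl_mono (by simp) a.2) hx


/-- nondegenerate vanishing sum -/
def NonDeg {ι : Type*} (I : Finset ι) (y : ι → ℂ) : Prop :=
  ∑ b ∈ I, y b = 0 ∧ ∀ J ⊆ I, J.Nonempty → J ≠ I → ∑ b ∈ J, y b ≠ 0

lemma stage (c : ℂ → ℂ) (I0 : Finset ℂ) (S0 : Set ℂ)
    (hcore : ∀ (I : Finset ℂ) (S : Set ℂ), I ⊆ I0 → S ⊆ S0 → S.Infinite → I.Nonempty →
      (∀ z ∈ S, NonDeg I (fun b => c b * Complex.exp (b * z))) → ∃ S' ⊆ S, S'.Infinite ∧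
        ∀ z ∈ S', ∀ z' ∈ S', ∀ b ∈ I, ∀ b' ∈ I, Complex.exp ((b - b') * (z - z')) = 1) :
    ∀ (n : ℕ) (I : Finset ℂ) (S : Set ℂ), I.card = n → I ⊆ I0 → S ⊆ S0 → S.Infinite →
      (∀ z ∈ S, ∑ b ∈ I, c b * Complex.exp (b * z) = 0) → ∃ S' ⊆ S, S'.Infinite ∧
      ∀ z ∈ S', ∀ z' ∈ S', ∀ m : ℕ, ∑ b ∈ I, c b * Complex.exp (b * (z + m * (z' - z))) = 0 := by
  classical
  intro n
  induction n using Nat.strong_induction_on with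
  | _ n ih =>
  intro I S hn hI hS hinf hvan
  rcases I.eq_empty_or_nonempty with rfl | hne
  · exact ⟨S, Subset.rfl, hinf, by simp⟩
  let V : Finset ℂ → Set ℂ := fun J => {z | z ∈ S ∧ ∑ b ∈ J, c b * Complex.exp (b * z) = 0}
  let F : Finset (Finset ℂ) := I.powerset.filter (fun J => J.Nonempty ∧ (V J).Infinite)
  have hF : F.Nonempty := ⟨I, by
    simp only [F, Finset.mem_filter, Finset.mem_powerset]
    refine ⟨Finset.Subset.refl _, hne, ?_⟩
    have : V I = S := by ext z; exact ⟨fun h => h.1, fun h => ⟨h, hvan z h⟩⟩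
    rw [this]; exact hinf⟩
  obtain ⟨I₁, hI₁, hmin⟩ := F.exists_minimal hF
  simp only [F, Finset.mem_filter, Finset.mem_powerset] at hI₁
  obtain ⟨hI₁I, hI₁ne, hI₁inf⟩ := hI₁
  let bad : Set ℂ := ⋃ J ∈ I₁.powerset.filter (fun J => J.Nonempty ∧ J ≠ I₁), V J
  have hbad : bad.Finite := by
    apply Set.Finite.biUnion (Finset.finite_toSet _)
    intro J hJ
    simp only [Finset.mem_coe, Finset.mem_filter, Finset.mem_powerset] at hJ
    by_contra hcon
    have hJF : J ∈ F := by
      simp only [F, Finset.mem_filter, Finset.mem_powerset]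
      exact ⟨hJ.1.trans hI₁I, hJ.2.1, hcon⟩
    exact hJ.2.2 (Finset.Subset.antisymm hJ.1 (hmin hJF hJ.1))
  obtain ⟨S₃, hS₃, hS₃inf, hS₃e⟩ := hcore I₁ (V I₁ \ bad) (hI₁I.trans hI)
    (fun z hz => hS hz.1.1) (hI₁inf.sdiff hbad) hI₁ne (by
      intro z hz
      refine ⟨hz.1.2, fun J hJ hJne hJI h0 => hz.2 ?_⟩
      simp only [bad, mem_iUnion, Finset.mem_filter, Finset.mem_powerset]
      exact ⟨J, ⟨hJ, hJne, hJI⟩, hz.1.1, h0⟩)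
  have hsub : S₃ ⊆ S := fun z hz => (hS₃ hz).1.1
  obtain ⟨S₄, hS₄, hS₄inf, hS₄e⟩ := ih (I \ I₁).card (by
      rw [← hn]; exact Finset.card_lt_card (Finset.sdiff_ssubset hI₁I hI₁ne)) (I \ I₁) S₃ rfl
    (Finset.sdiff_subset.trans hI) (hsub.trans hS) hS₃inf (by
      intro z hz
      have h1 := hvan z (hsub hz)
      rw [← Finset.sum_sdiff hI₁I, (hS₃ hz).1.2, add_zero] at h1
      exact h1)
  refine ⟨S₄, hS₄.trans hsub, hS₄inf, fun z hz z' hz' m => ?_⟩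
  rw [← Finset.sum_sdiff hI₁I, hS₄e z hz z' hz' m, zero_add]
  obtain ⟨b₀, hb₀⟩ := hI₁ne
  have : ∀ b ∈ I₁, c b * Complex.exp (b * (z + m * (z' - z))) =
      Complex.exp (b₀ * (z' - z)) ^ m * (c b * Complex.exp (b * z)) := by
    intro b hb
    have h1 := hS₃e z' (hS₄ hz') z (hS₄ hz) b hb b₀ hb₀
    have h2 : Complex.exp (b * (z' - z)) = Complex.exp (b₀ * (z' - z)) := by
      rw [show b * (z' - z) = (b - b₀) * (z' - z) + b₀ * (z' - z) by ring, Complex.exp_add, h1, one_mul]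
    rw [← h2, ← Complex.exp_nat_mul, mul_left_comm, ← Complex.exp_add]
    ring_nf
  rw [Finset.sum_congr rfl this, ← Finset.mul_sum, (hS₃ (hS₄ hz)).1.2, mul_zero]


lemma mem_acl_of_pow {Y : Set ℂ} {x : ℂ} {n : ℕ} (hn : n ≠ 0) (h : x ^ n ∈ acl Y) : x ∈ acl Y := by
  apply mem_acl_of_isAlgebraic
  exact IsAlgebraic.of_pow (Nat.pos_of_ne_zero hn) (isAlgebraic_algebraMap (⟨_, h⟩ : acl Y))

lemma exp_rat_mem {Y : Set ℂ} {w : ℂ} (q : ℚ) (h : Complex.exp w ∈ acl Y) :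
    Complex.exp (q * w) ∈ acl Y := by
  apply mem_acl_of_pow q.den_nz
  have : Complex.exp (q * w) ^ q.den = Complex.exp w ^ q.num := by
    rw [← Complex.exp_nat_mul, ← Complex.exp_int_mul]
    congr 1
    rw [← mul_assoc]
    congr 1
    exact_mod_cast Rat.den_mul_eq_num q
  rw [this]
  exact Subfield.zpow_mem _ h _

lemma common_den {ι : Type*} (s : Finset ι) (q : ι → ℚ) : ∃ N : ℕ, N ≠ 0 ∧ ∀ i ∈ s, ∃ m : ℤ, q i = m / N := by
  classical
  refine ⟨∏ i ∈ s, (q i).den, Finset.prod_ne_zero_iff.2 fun i _ => (q i).den_nz, fun i hi => ?_⟩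
  obtain ⟨k, hk⟩ := Finset.dvd_prod_of_mem (fun i => (q i).den) hi
  refine ⟨(q i).num * k, ?_⟩
  have hk0 : (k : ℚ) ≠ 0 := by
    have : ∏ i ∈ s, (q i).den ≠ 0 := Finset.prod_ne_zero_iff.2 fun i _ => (q i).den_nz
    rw [hk] at this
    exact_mod_cast right_ne_zero_of_mul this
  rw [hk]
  push_cast
  rw [mul_div_mul_right _ _ hk0, Rat.num_div_den]

/-- nondegenerate sum with algebraically independent monomials -/
lemma monomial_const {ι : Type*} {δ : ℕ} (I : Finset ι) (M : Subfield ℂ) (a y : ι → ℂ) (m : ι → Fin δ → ℤ)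
    (x : Fin δ → ℂ) (hx0 : ∀ i, x i ≠ 0) (hx : AlgebraicIndependent M x) (ha : ∀ b ∈ I, a b ∈ M) (E : ℂ) (hE : E ≠ 0)
    (hy : ∀ b ∈ I, y b = E * (a b * ∏ i, x i ^ m b i)) (hnd : NonDeg I y) :
    ∀ b ∈ I, ∀ b' ∈ I, m b = m b' := by
  classical
  obtain ⟨N, hN⟩ : ∃ N : ℕ, ∀ b ∈ I, ∀ i, 0 ≤ m b i + N := by
    refine ⟨∑ b ∈ I, ∑ i, (m b i).natAbs, fun b hb i => ?_⟩
    have h1 : (m b i).natAbs ≤ ∑ i, (m b i).natAbs :=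
      Finset.single_le_sum (f := fun i => (m b i).natAbs) (fun _ _ => Nat.zero_le _) (Finset.mem_univ i)
    have h2 : ∑ i, (m b i).natAbs ≤ ∑ b ∈ I, ∑ i, (m b i).natAbs :=
      Finset.single_le_sum (f := fun b => ∑ i, (m b i).natAbs) (fun _ _ => Nat.zero_le _) hb
    generalize ∑ b ∈ I, ∑ i, (m b i).natAbs = M at *
    omega
  let aK : ι → M := fun b => if h : a b ∈ M then ⟨a b, h⟩ else 0
  have haK : ∀ b ∈ I, (aK b : ℂ) = a b := fun b hb => by simp [aK, ha b hb]
  let e : ι → (Fin δ →₀ ℕ) := fun b => Finsupp.equivFunOnFinite.symm (fun i => (m b i + N).toNat)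
  let P : MvPolynomial (Fin δ) M := ∑ b ∈ I, MvPolynomial.monomial (e b) (aK b)
  have hmon : ∀ b ∈ I, ∏ i, x i ^ (m b i + N).toNat = (∏ i, x i ^ m b i) * (∏ i, x i) ^ N := by
    intro b hb
    rw [← Finset.prod_pow, ← Finset.prod_mul_distrib]
    refine Finset.prod_congr rfl fun i _ => ?_
    rw [← zpow_natCast, Int.toNat_of_nonneg (hN b hb i), zpow_add₀ (hx0 i), zpow_natCast]
  have hP : MvPolynomial.aeval x P = 0 := by
    have h1 : E * MvPolynomial.aeval x P = 0 := by
      have h2 : E * MvPolynomial.aeval x P = (∏ i, x i) ^ N * ∑ b ∈ I, y b := by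
        simp only [P, map_sum, MvPolynomial.aeval_monomial]
        rw [Finset.mul_sum, Finset.mul_sum]
        refine Finset.sum_congr rfl fun b hb => ?_
        rw [Finsupp.prod_fintype _ _ (fun i => pow_zero _)]
        simp only [e, Finsupp.equivFunOnFinite_symm_apply_apply]
        rw [hmon b hb, hy b hb, show algebraMap M ℂ (aK b) = a b from haK b hb]
        ring
      rw [h2, hnd.1, mul_zero]
    exact (mul_eq_zero.1 h1).resolve_left hE
  have hP0 : P = 0 := hx (by rw [hP, map_zero])
  intro b hb b' hb'
  let J := I.filter (fun k => m k = m b)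
  have hJ : J = I := by
    by_contra hne
    apply hnd.2 J (Finset.filter_subset _ _) ⟨b, by simp [J, hb]⟩ hne
    have h1 := congrArg (MvPolynomial.coeff (e b)) hP0
    simp only [P, MvPolynomial.coeff_sum, MvPolynomial.coeff_monomial, MvPolynomial.coeff_zero] at h1
    rw [← Finset.sum_filter] at h1
    have h2 : I.filter (fun k => e k = e b) = J := by
      apply Finset.filter_congr
      intro k hk
      simp only [e, EmbeddingLike.apply_eq_iff_eq]
      constructor
      · intro h
        funext i
        have h3 : (m k i + N).toNat = (m b i + N).toNat := congrFun h i
        have h4 := hN k hk i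
        have h5 := hN b hb i
        omega
      · intro h; rw [h]
    rw [h2] at h1
    have h3 := congrArg (algebraMap M ℂ) h1
    rw [map_sum, map_zero] at h3
    rw [Finset.sum_congr rfl (g := fun k => (E * ∏ i, x i ^ m b i) * algebraMap M ℂ (aK k))]
    · rw [← Finset.mul_sum, h3, mul_zero]
    · intro k hk
      simp only [J, Finset.mem_filter] at hk
      rw [hy k hk.1, hk.2, show algebraMap M ℂ (aK k) = a k from haK k hk.1]
      ring
  have : b' ∈ J := by rw [hJ]; exact hb'
  exact (Finset.mem_filter.1 this).2.symm


lemma p2_step (C : Finset ℂ) (I : Finset ℂ) (c : ℂ → ℂ)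
    (hI : ∀ b ∈ I, b ∈ acl (C : Set ℂ) ∧ c b ∈ acl (C : Set ℂ)) (z : ℂ) (hz : z ∈ acl (C : Set ℂ))
    (hnd : NonDeg I (fun b => c b * Complex.exp (b * z)))
    (V : Submodule ℚ ℂ) [FiniteDimensional ℚ V] (hVC : ∀ v ∈ V, v ∈ acl (C : Set ℂ)) (Y : Finset ℂ)
    (hVY : ∀ v ∈ V, Complex.exp v ∈ acl (C ∪ Y : Set ℂ)) (hbad : ∃ b ∈ I, ∃ b' ∈ I, (b - b') * z ∉ V) :
    ∃ V' : Submodule ℚ ℂ, FiniteDimensional ℚ V' ∧ (∀ v ∈ V', v ∈ acl (C : Set ℂ)) ∧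
      ∃ Y' : Finset ℂ, (∀ v ∈ V', Complex.exp v ∈ acl (C ∪ Y' : Set ℂ)) ∧
      Y'.card + 1 + Module.finrank ℚ V ≤ Y.card + Module.finrank ℚ V' := by
  classical
  obtain ⟨b₁, hb₁, b₂, hb₂, hb12⟩ := hbad
  let X : Finset ℂ := I.image (fun b => (b - b₁) * z)
  let V' : Submodule ℚ ℂ := V ⊔ Submodule.span ℚ (X : Set ℂ)
  have hXfin : FiniteDimensional ℚ (Submodule.span ℚ (X : Set ℂ)) :=
    FiniteDimensional.span_of_finite ℚ X.finite_toSet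
  have hV'fin : FiniteDimensional ℚ V' := inferInstance
  have hV'C : ∀ v ∈ V', v ∈ acl (C : Set ℂ) := by
    let A : Submodule ℚ ℂ := (acl (C : Set ℂ)).toAddSubgroup.toAddSubmonoid.toNatSubmodule.carrier |> fun _ =>
      { carrier := acl (C : Set ℂ)
        add_mem' := fun h1 h2 => Subfield.add_mem _ h1 h2
        zero_mem' := Subfield.zero_mem _
        smul_mem' := fun q x hx => by
          rw [Algebra.smul_def]
          exact Subfield.mul_mem _ (by simpa using SubfieldClass.ratCast_mem (acl (C : Set ℂ)) q) hx }
    have : V' ≤ A := by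
      refine sup_le hVC (Submodule.span_le.2 ?_)
      intro x hx
      simp only [X, Finset.coe_image, mem_image, Finset.mem_coe] at hx
      obtain ⟨b, hb, rfl⟩ := hx
      exact Subfield.mul_mem _ (Subfield.sub_mem _ (hI b hb).1 (hI b₁ hb₁).1) hz
    exact this
  obtain ⟨W0, hW0⟩ := Submodule.exists_isCompl V
  let W : Submodule ℚ ℂ := V' ⊓ W0
  have hWfin : FiniteDimensional ℚ W := Submodule.finiteDimensional_of_le (inf_le_left : W ≤ V')
  have hsup : V ⊔ W = V' := by
    have : V ⊔ (V' ⊓ W0) = V' ⊓ (V ⊔ W0) := by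
      rw [inf_comm, ← sup_inf_assoc_of_le W0 (le_sup_left : V ≤ V'), inf_comm]
    rw [this, hW0.sup_eq_top, inf_top_eq]
  have hinf : V ⊓ W = ⊥ := by
    rw [eq_bot_iff, ← hW0.inf_eq_bot]
    exact inf_le_inf_left _ inf_le_right
  have hdim : Module.finrank ℚ V' = Module.finrank ℚ V + Module.finrank ℚ W := by
    have := Submodule.finrank_sup_add_finrank_inf_eq V W
    rw [hsup, hinf, finrank_bot, add_zero] at this
    exact this
  let δ := Module.finrank ℚ W
  let B := Module.finBasis ℚ W
  have hdec : ∀ v ∈ V', ∃ v0 ∈ V, ∃ q : Fin δ → ℚ, v = v0 + ∑ i, (q i : ℂ) * (B i : ℂ) := by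
    intro v hv
    rw [← hsup] at hv
    obtain ⟨v0, hv0, w, hw, rfl⟩ := Submodule.mem_sup.1 hv
    refine ⟨v0, hv0, fun i => B.repr ⟨w, hw⟩ i, ?_⟩
    have := congrArg W.subtype (B.sum_repr ⟨w, hw⟩)
    rw [map_sum] at this
    simp only [map_smul, Submodule.subtype_apply, Rat.smul_def] at this
    rw [this]
  have hmemV' : ∀ b ∈ I, (b - b₁) * z ∈ V' := fun b hb =>
    (le_sup_right : _ ≤ V') (Submodule.subset_span (by
      simp only [X, Finset.coe_image]; exact ⟨b, hb, rfl⟩))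
  have hdecI : ∀ b ∈ I, ∃ v0 ∈ V, ∃ q : Fin δ → ℚ, (b - b₁) * z = v0 + ∑ i, (q i : ℂ) * (B i : ℂ) :=
    fun b hb => hdec _ (hmemV' b hb)
  choose! v0 hv0 q hq using hdecI
  obtain ⟨N, hN0, hN⟩ := common_den (I ×ˢ (Finset.univ : Finset (Fin δ))) (fun p => q p.1 p.2)
  have hN' : ∀ b ∈ I, ∃ m : Fin δ → ℤ, ∀ i, q b i = m i / N := fun b hb => by
    have : ∀ i, ∃ m : ℤ, q b i = m / N := fun i => hN (b, i) (by simp [hb])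
    choose m hm using this
    exact ⟨m, hm⟩
  choose! m hm using hN'
  let w : Fin δ → ℂ := fun i => (B i : ℂ) / N
  let x : Fin δ → ℂ := fun i => Complex.exp (w i)
  have hdep : ¬ AlgebraicIndependent (acl (C ∪ Y : Set ℂ)) x := by
    intro hx
    have := monomial_const I (acl (C ∪ Y : Set ℂ)) (fun b => c b * Complex.exp (v0 b))
      (fun b => c b * Complex.exp (b * z)) m x (fun i => Complex.exp_ne_zero _) hx
      (fun b hb => Subfield.mul_mem _ (acl_mono subset_union_left (hI b hb).2) (hVY _ (hv0 b hb)))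
      (Complex.exp (b₁ * z)) (Complex.exp_ne_zero _) (by
        intro b hb
        simp only [x]
        have e1 : ∀ i, Complex.exp (w i) ^ m b i = Complex.exp (m b i * w i) := fun i => (Complex.exp_int_mul _ _).symm
        simp only [e1]
        rw [← Complex.exp_sum, mul_assoc, mul_left_comm, ← Complex.exp_add, ← Complex.exp_add]
        congr 2
        have := hq b hb
        have e2 : ∑ i, (m b i : ℂ) * w i = ∑ i, (q b i : ℂ) * (B i : ℂ) := by
          refine Finset.sum_congr rfl fun i _ => ?_
          rw [hm b hb i]
          simp only [w]
          push_cast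
          ring
        rw [e2]
        linear_combination this) hnd b₁ hb₁ b₂ hb₂
    apply hb12
    have e : (b₁ - b₂) * z = v0 b₁ - v0 b₂ := by
      have h1 := hq b₁ hb₁
      have h2 := hq b₂ hb₂
      have h3 : ∑ i, (q b₁ i : ℂ) * (B i : ℂ) = ∑ i, (q b₂ i : ℂ) * (B i : ℂ) := by
        refine Finset.sum_congr rfl fun i _ => ?_
        rw [hm b₁ hb₁ i, hm b₂ hb₂ i, this]
      rw [h3] at h1
      linear_combination h1 - h2
    rw [e]
    exact V.sub_mem (hv0 _ hb₁) (hv0 _ hb₂)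
  obtain ⟨i, hi⟩ := dep_acl x hdep
  let Y' : Finset ℂ := Y ∪ (Finset.univ.erase i).image x
  have hY' : (C ∪ Y ∪ x '' {i}ᶜ : Set ℂ) ⊆ (C ∪ Y' : Set ℂ) := by
    rintro y ((hy | hy) | ⟨j, hj, rfl⟩)
    · exact Or.inl hy
    · refine Or.inr ?_; simp only [Y', Finset.coe_union]; exact Or.inl hy
    · refine Or.inr ?_; simp only [Y', Finset.coe_union]
      refine Or.inr ?_
      simp only [Finset.coe_image]
      exact ⟨j, by simpa using hj, rfl⟩
  refine ⟨V', hV'fin, hV'C, Y', ?_, ?_⟩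
  · have hx : ∀ j, x j ∈ acl (C ∪ Y' : Set ℂ) := by
      intro j
      by_cases hj : j = i
      · rw [hj]; exact acl_mono hY' hi
      · exact subset_acl _ (hY' (Or.inr ⟨j, hj, rfl⟩))
    intro v hv
    obtain ⟨v1, hv1, r, rfl⟩ := hdec v hv
    rw [Complex.exp_add, Complex.exp_sum]
    refine Subfield.mul_mem _ (acl_mono (fun y hy => hY' (Or.inl hy)) (hVY v1 hv1)) (Subfield.prod_mem _ fun j _ => ?_)
    have : (r j : ℂ) * (B j : ℂ) = ((r j * N : ℚ) : ℂ) * w j := by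
      simp only [w]
      have : (N : ℂ) ≠ 0 := by exact_mod_cast hN0
      push_cast
      field_simp
    rw [this]
    exact exp_rat_mem _ (hx j)
  · have h1 : Y'.card ≤ Y.card + (δ - 1) := by
      refine (Finset.card_union_le _ _).trans (add_le_add le_rfl (Finset.card_image_le.trans ?_))
      rw [Finset.card_erase_of_mem (Finset.mem_univ _), Finset.card_univ, Fintype.card_fin]
    have h2 : 0 < δ := i.pos
    have h3 : Module.finrank ℚ V' = Module.finrank ℚ V + δ := hdim
    omega

lemma p2 (hSC : SchanuelConjecture) (C : Finset ℂ) (I : Finset ℂ) (c : ℂ → ℂ)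
    (hI : ∀ b ∈ I, b ∈ acl (C : Set ℂ) ∧ c b ∈ acl (C : Set ℂ)) (S : Set ℂ)
    (hS : ∀ z ∈ S, z ∈ acl (C : Set ℂ))
    (hnd : ∀ z ∈ S, NonDeg I (fun b => c b * Complex.exp (b * z))) :
    ∃ V : Submodule ℚ ℂ, FiniteDimensional ℚ V ∧ ∀ z ∈ S, ∀ b ∈ I, ∀ b' ∈ I, (b - b') * z ∈ V := by
  classical
  by_contra hcon
  push Not at hcon
  have key : ∀ k : ℕ, ∃ V : Submodule ℚ ℂ, FiniteDimensional ℚ V ∧ (∀ v ∈ V, v ∈ acl (C : Set ℂ)) ∧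
      ∃ Y : Finset ℂ, (∀ v ∈ V, Complex.exp v ∈ acl (C ∪ Y : Set ℂ)) ∧ Y.card + k ≤ Module.finrank ℚ V := by
    intro k
    induction k with
    | zero =>
      refine ⟨⊥, inferInstance, ?_, ∅, ?_, by simp⟩
      · intro v hv; rw [(Submodule.mem_bot ℚ).1 hv]; exact Subfield.zero_mem _
      · intro v hv; rw [(Submodule.mem_bot ℚ).1 hv, Complex.exp_zero]; exact Subfield.one_mem _
    | succ k ih =>
      obtain ⟨V, hV, hVC, Y, hVY, hk⟩ := ih
      obtain ⟨z, hz, b, hb, b', hb', hbb⟩ := hcon V hV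
      obtain ⟨V', h1, h2, Y', h3, h4⟩ := p2_step C I c hI z (hS z hz) (hnd z hz) V hVC Y hVY ⟨b, hb, b', hb', hbb⟩
      exact ⟨V', h1, h2, Y', h3, by omega⟩
  obtain ⟨V, hV, hVC, Y, hVY, hk⟩ := key (C.card + 1)
  let B := Module.finBasis ℚ V
  have := scl hSC (fun i => (B i : ℂ)) (B.linearIndependent.map' V.subtype (by simp)) (C ∪ Y)
    (fun i => acl_mono (by simp) (hVC _ (B i).2)) (fun i => by
      rw [Finset.coe_union]; exact hVY _ (B i).2)
  rw [Fintype.card_fin] at this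
  have h2 := Finset.card_union_le C Y
  omega


/-- a subfield as a rational subspace -/
def sfSub (K : Subfield ℂ) : Submodule ℚ ℂ where
  carrier := K
  add_mem' := fun h1 h2 => K.add_mem h1 h2
  zero_mem' := K.zero_mem
  smul_mem' := fun q x hx => by
    rw [Algebra.smul_def]
    exact K.mul_mem (by simpa using SubfieldClass.ratCast_mem K q) hx

/-- the rational space of logarithms of elements of `acl Y` -/
def expSub (Y : Set ℂ) : Submodule ℚ ℂ where
  carrier := {v | Complex.exp v ∈ acl Y}
  add_mem' := fun h1 h2 => by
    simp only [Set.mem_ofPred_eq] at *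
    rw [Complex.exp_add]; exact Subfield.mul_mem _ h1 h2
  zero_mem' := by simp only [Set.mem_ofPred_eq, Complex.exp_zero]; exact Subfield.one_mem _
  smul_mem' := fun q x hx => by
    simp only [Set.mem_ofPred_eq] at *
    rw [Rat.smul_def]
    exact exp_rat_mem q hx

lemma mem_expSub {Y : Set ℂ} {v : ℂ} : v ∈ expSub Y ↔ Complex.exp v ∈ acl Y := Iff.rfl

lemma four_exp (hSC : SchanuelConjecture) (b b' w w' : ℂ) (hb : b ≠ 0) (hb' : ∀ q : ℚ, b' ≠ q * b)
    (hw : w ≠ 0) (hw' : ∀ q : ℚ, w' ≠ q * w) (h1 : Complex.exp (b * w) ∈ acl ∅)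
    (h2 : Complex.exp (b * w') ∈ acl ∅) (h3 : Complex.exp (b' * w) ∈ acl ∅)
    (h4 : Complex.exp (b' * w') ∈ acl ∅) : False := by
  classical
  let X : Set ℂ := {b * w, b * w', b' * w, b' * w'}
  have hXfin : X.Finite := by simp [X]
  let V : Submodule ℚ ℂ := Submodule.span ℚ X
  have hVfin : FiniteDimensional ℚ V := FiniteDimensional.span_of_finite ℚ hXfin
  have hVe : V ≤ expSub ∅ := by
    refine Submodule.span_le.2 ?_
    rintro v (rfl | rfl | rfl | rfl)
    exacts [h1, h2, h3, h4]
  have hx : b * w ∈ V := Submodule.subset_span (by simp [X])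
  have hy : b * w' ∈ V := Submodule.subset_span (by simp [X])
  have hx' : b' * w ∈ V := Submodule.subset_span (by simp [X])
  have hy' : b' * w' ∈ V := Submodule.subset_span (by simp [X])
  have hnot : b * w ∉ Submodule.span ℚ {b * w'} := by
    intro h
    obtain ⟨q, hq⟩ := Submodule.mem_span_singleton.1 h
    rw [Rat.smul_def] at hq
    have hq2 : (q : ℂ) * w' = w := by
      have : b * ((q : ℂ) * w') = b * w := by linear_combination hq
      exact mul_left_cancel₀ hb this
    have hq0 : (q : ℂ) ≠ 0 := by
      rintro h0; rw [h0, zero_mul] at hq2; exact hw hq2.symm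
    apply hw' q⁻¹
    push_cast
    rw [← hq2]; field_simp
  obtain ⟨φ, hφ, hφ2⟩ := Submodule.exists_le_ker_of_notMem hnot
  have hφy : φ (b * w') = 0 := hφ2 (Submodule.mem_span_singleton_self _)
  let R : Submodule ℚ ℂ := V ⊓ LinearMap.ker φ
  have hRfin : FiniteDimensional ℚ R := Submodule.finiteDimensional_of_le (inf_le_left : R ≤ V)
  let B := Module.finBasis ℚ R
  let Y : Finset ℂ := Finset.univ.image (fun i => (B i : ℂ))
  have hYcard : Y.card ≤ Module.finrank ℚ R := by
    refine Finset.card_image_le.trans ?_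
    simp
  have hRspan : Submodule.span ℚ (range fun i => (B i : ℂ)) = R := by
    have := congrArg (Submodule.map R.subtype) B.span_eq
    rw [Submodule.map_span, Submodule.map_top, Submodule.range_subtype, ← range_comp] at this
    exact this
  have hRY : ∀ v ∈ R, v ∈ acl (Y : Set ℂ) := by
    have : R ≤ sfSub (acl (Y : Set ℂ)) := by
      rw [← hRspan, Submodule.span_le]
      rintro _ ⟨i, rfl⟩
      refine subset_acl _ ?_
      simp [Y]
    exact this
  have hli : LinearIndependent ℚ (fun i => (B i : ℂ)) := B.linearIndependent.map' R.subtype (by simp)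
  have hxR : b * w ∉ Submodule.span ℚ (range fun i => (B i : ℂ)) := by
    rw [hRspan]
    intro h
    exact hφ h.2
  have hxacl : b * w ∉ acl (Y : Set ℂ) := by
    intro hmem
    have := scl hSC _ (hli.option hxR) Y (by
      rintro (_ | i)
      · exact hmem
      · exact hRY _ (B i).2) (by
      rintro (_ | i)
      · exact acl_mono (empty_subset _) h1
      · exact acl_mono (empty_subset _) (hVe ((B i).2.1)))
    rw [Fintype.card_option, Fintype.card_fin] at this
    omega
  have hdec : ∀ v ∈ V, ∃ a : ℚ, ∃ r ∈ R, v = a * (b * w) + r := by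
    intro v hv
    refine ⟨φ v / φ (b * w), v - (φ v / φ (b * w)) • (b * w), ⟨V.sub_mem hv (V.smul_mem _ hx), ?_⟩, ?_⟩
    · rw [SetLike.mem_coe, LinearMap.mem_ker, map_sub, map_smul, smul_eq_mul]; field_simp; ring
    · rw [Rat.smul_def]; ring
  obtain ⟨a, r, hr, har⟩ := hdec _ hx'
  obtain ⟨a', r', hr', har'⟩ := hdec _ hy'
  have hyR : b * w' ∈ R := ⟨hy, hφy⟩
  have hw'0 : w' ≠ 0 := by
    intro h; apply hw' 0; simp [h]
  let p : Polynomial ℂ := Polynomial.C (a' : ℂ) * Polynomial.X ^ 2 + Polynomial.C (r' - a * (b * w')) * Polynomial.X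
    + Polynomial.C (-(r * (b * w')))
  have hrat : ∀ q : ℚ, (q : ℂ) ∈ acl (Y : Set ℂ) := fun q => SubfieldClass.ratCast_mem _ q
  by_cases hp : p = 0
  · have h0 := congrArg (fun p => Polynomial.coeff p 0) hp
    simp [p, Polynomial.coeff_X] at h0
    rcases h0 with h0 | h0 | h0
    · apply hb' a
      rw [h0, add_zero] at har
      exact mul_right_cancel₀ hw (by linear_combination har)
    · exact hb h0
    · exact hw'0 h0
  · apply hxacl
    refine mem_acl_of_root p hp ?_ ?_
    · intro n
      have m1 : (r' - a * (b * w')) ∈ acl (Y : Set ℂ) :=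
        Subfield.sub_mem _ (hRY _ hr') (Subfield.mul_mem _ (hrat a) (hRY _ hyR))
      have m2 : -(r * (b * w')) ∈ acl (Y : Set ℂ) :=
        Subfield.neg_mem _ (Subfield.mul_mem _ (hRY _ hr) (hRY _ hyR))
      simp only [p, Polynomial.coeff_add, Polynomial.coeff_C_mul, Polynomial.coeff_X_pow, Polynomial.coeff_X, Polynomial.coeff_C]
      refine Subfield.add_mem _ (Subfield.add_mem _ (Subfield.mul_mem _ (hrat _) ?_) (Subfield.mul_mem _ m1 ?_)) ?_
      · split_ifs <;> [exact Subfield.one_mem _; exact Subfield.zero_mem _]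
      · split_ifs <;> [exact Subfield.one_mem _; exact Subfield.zero_mem _]
      · split_ifs <;> [exact m2; exact Subfield.zero_mem _]
    · simp only [p, Polynomial.eval_add, Polynomial.eval_mul, Polynomial.eval_C, Polynomial.eval_pow, Polynomial.eval_X]
      linear_combination (b*w') * har - (b * w) * har'


/-- the coefficients after eliminating the pivot -/
def pcf {ι : Type*} (D : Derivation ℚ ℂ ℂ) (lam a : ι → ℂ) (l : ι) (i : ι) : ℂ :=
  D (a i) * a l - a i * D (a l) + a i * a l * (lam i - lam l)

lemma pcf_sum {ι : Type*} (D : Derivation ℚ ℂ ℂ) (lam a y : ι → ℂ) (l : ι) (T : Finset ι)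
    (h : ∀ i ∈ T, D (y i) = lam i * y i) :
    ∑ i ∈ T, pcf D lam a l i * y i
      = a l * D (∑ i ∈ T, a i * y i) - (D (a l) + a l * lam l) * ∑ i ∈ T, a i * y i := by
  rw [map_sum, Finset.mul_sum, Finset.mul_sum, ← Finset.sum_sub_distrib]
  refine Finset.sum_congr rfl fun i hi => ?_
  rw [Derivation.leibniz, h i hi, pcf]
  simp only [smul_eq_mul]
  ring

lemma const_of (D : Derivation ℚ ℂ ℂ) (X al yl lam : ℂ) (ha : al ≠ 0) (hy : yl ≠ 0) (hD : D yl = lam * yl)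
    (h : al * D X - (D al + al * lam) * X = 0) : ∃ c, D c = 0 ∧ X = c * (al * yl) := by
  refine ⟨X / (al * yl), ?_, by field_simp⟩
  rw [Derivation.leibniz_div, Derivation.leibniz, hD]
  simp only [smul_eq_mul]
  have : al * yl * D X - X * (al * (lam * yl) + yl * D al) = 0 := by linear_combination yl * h
  rw [this]; simp

lemma elim (D : Derivation ℚ ℂ ℂ) {ι : Type*} [DecidableEq ι] (n : ℕ) : ∀ (N E : Submodule ℚ ℂ), N.FG → E.FG →
    ∃ M : Submodule ℚ ℂ, M.FG ∧ ∀ (Z J : Finset ι) (y lam a : ι → ℂ), Z.card ≤ n → J ⊆ Z →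
      (∀ i ∈ Z, y i ≠ 0) → (∀ i ∈ Z, D (y i) = lam i * y i) → (∀ i ∈ Z, lam i ∈ E) → (∀ i ∈ Z, a i ∈ N) →
      ∑ i ∈ Z, a i * y i = 0 → ∑ i ∈ J, a i * y i ≠ 0 →
      ∃ k ∈ J, ∃ l ∈ Z, l ∉ J ∧ ∃ r ∈ M, ∃ r' ∈ M, ∃ c, r ≠ 0 ∧ r' ≠ 0 ∧ c ≠ 0 ∧ D c = 0 ∧ r * y k = c * r' * y l := by
  induction n with
  | zero =>
    intro N E hN hE
    refine ⟨N, hN, fun Z J y lam a hZ hJ _ _ _ _ _ hne => ?_⟩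
    have hZ0 : Z = ∅ := by simpa using hZ
    rw [hZ0, Finset.subset_empty] at hJ
    exact absurd (by rw [hJ, Finset.sum_empty]) hne
  | succ n ih =>
    intro N E hN hE
    let DL : ℂ →ₗ[ℚ] ℂ := D.toLinearMap
    let N2 : Submodule ℚ ℂ := (N.map DL) * N ⊔ N * N * E
    have hN2 : N2.FG := ((hN.map DL).mul hN).sup ((hN.mul hN).mul hE)
    obtain ⟨M1, hM1, H1⟩ := ih N E hN hE
    obtain ⟨M2, hM2, H2⟩ := ih N2 E hN2 hE
    have hpcf : ∀ (lam a : ι → ℂ) (l i : ι), a i ∈ N → a l ∈ N → lam i ∈ E → lam l ∈ E → pcf D lam a l i ∈ N2 := by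
      intro lam a l i hi hl hei hel
      refine N2.add_mem (N2.sub_mem ?_ ?_) ?_
      · exact (le_sup_left : _ ≤ N2) (Submodule.mul_mem_mul (Submodule.mem_map_of_mem (f := DL) hi) hl)
      · rw [mul_comm]
        exact (le_sup_left : _ ≤ N2) (Submodule.mul_mem_mul (Submodule.mem_map_of_mem (f := DL) hl) hi)
      · exact (le_sup_right : _ ≤ N2) (Submodule.mul_mem_mul (Submodule.mul_mem_mul hi hl) (E.sub_mem hei hel))
    have l1 : M1 ≤ M1 ⊔ M2 ⊔ N := le_sup_left.trans le_sup_left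
    have l2 : M2 ≤ M1 ⊔ M2 ⊔ N := le_sup_right.trans le_sup_left
    have l3 : N ≤ M1 ⊔ M2 ⊔ N := le_sup_right
    refine ⟨M1 ⊔ M2 ⊔ N, (hM1.sup hM2).sup hN, fun Z J y lam a hZ hJ hy hD hlam ha hsum hne => ?_⟩
    by_cases h0 : ∃ i ∈ Z, a i = 0
    · obtain ⟨i, hi, hai⟩ := h0
      have e1 : ∀ T : Finset ι, ∑ j ∈ T.erase i, a j * y j = ∑ j ∈ T, a j * y j := fun T =>
        Finset.sum_erase _ (by rw [hai, zero_mul])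
      have hsub : ∀ j ∈ Z.erase i, j ∈ Z := fun j hj => Finset.mem_of_mem_erase hj
      obtain ⟨k, hk, l, hl, hlJ, r, hr, r', hr', c, h⟩ := H1 (Z.erase i) (J.erase i) y lam a
        (by rw [Finset.card_erase_of_mem hi]; omega) (Finset.erase_subset_erase _ hJ)
        (fun j hj => hy j (hsub j hj)) (fun j hj => hD j (hsub j hj)) (fun j hj => hlam j (hsub j hj))
        (fun j hj => ha j (hsub j hj)) (by rw [e1, hsum]) (by rw [e1]; exact hne)
      exact ⟨k, Finset.mem_of_mem_erase hk, l, hsub l hl, fun hh => hlJ (Finset.mem_erase.2 ⟨Finset.ne_of_mem_erase hl, hh⟩),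
        r, l1 hr, r', l1 hr', c, h⟩
    · push Not at h0
      obtain ⟨l, hlZ, hlJ⟩ : ∃ l ∈ Z, l ∉ J := by
        by_contra hcon
        push Not at hcon
        exact hne (by rw [← hsum, Finset.Subset.antisymm hJ hcon])
      have hpl : pcf D lam a l l = 0 := by rw [pcf]; ring
      by_cases hX : ∑ i ∈ J, pcf D lam a l i * y i = 0
      · rw [pcf_sum D lam a y l J (fun i hi => hD i (hJ hi))] at hX
        obtain ⟨c, hc, hXc⟩ := const_of D _ _ _ _ (h0 l hlZ) (hy l hlZ) (hD l hlZ) hX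
        have hc0 : c ≠ 0 := by rintro rfl; rw [zero_mul] at hXc; exact hne hXc
        obtain ⟨k, hk⟩ : J.Nonempty := by
          by_contra hcon
          rw [Finset.not_nonempty_iff_eq_empty] at hcon
          exact hne (by rw [hcon, Finset.sum_empty])
        have hkl : k ≠ l := by rintro rfl; exact hlJ hk
        by_cases hX2 : ∑ i ∈ J, pcf D lam a k i * y i = 0
        · rw [pcf_sum D lam a y k J (fun i hi => hD i (hJ hi))] at hX2
          obtain ⟨c', hc', hXc'⟩ := const_of D _ _ _ _ (h0 k (hJ hk)) (hy k (hJ hk)) (hD k (hJ hk)) hX2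
          have hc0' : c' ≠ 0 := by rintro rfl; rw [zero_mul] at hXc'; exact hne hXc'
          refine ⟨k, hk, l, hlZ, hlJ, a k, l3 (ha k (hJ hk)), a l, l3 (ha l hlZ), c / c', h0 k (hJ hk), h0 l hlZ,
            div_ne_zero hc0 hc0', ?_, ?_⟩
          · rw [Derivation.leibniz_div, hc, hc']; simp
          · have : c' * (a k * y k) = c * (a l * y l) := by rw [← hXc, ← hXc']
            field_simp
            linear_combination this
        · let y2 : ι → ℂ := Function.update y l (-c * y l)
          have hy2l : y2 l = -c * y l := Function.update_self _ _ _
          have hy2 : ∀ i ∈ J, y2 i = y i := fun i hi => Function.update_of_ne (by rintro rfl; exact hlJ hi) _ _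
          have hy2D : ∀ i ∈ insert l J, D (y2 i) = lam i * y2 i := by
            intro i hi
            rcases Finset.mem_insert.1 hi with rfl | hi
            · rw [hy2l, Derivation.leibniz, hD _ hlZ, map_neg, hc]; simp only [smul_eq_mul]; ring
            · rw [hy2 i hi, hD i (hJ hi)]
          have hpk : pcf D lam a k k = 0 := by rw [pcf]; ring
          have hins : ∀ i ∈ insert l J, i ∈ Z := by
            intro i hi
            rcases Finset.mem_insert.1 hi with rfl | hi
            exacts [hlZ, hJ hi]
          have hsumJ : ∀ d : ι → ℂ, ∑ i ∈ J, d i * y2 i = ∑ i ∈ J, d i * y i := fun d =>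
            Finset.sum_congr rfl fun i hi => by rw [hy2 i hi]
          obtain ⟨k', hk', l', hl', hlJ', r, hr, r', hr', c2, h1, h2, h3, h4, h5⟩ :=
            H2 ((insert l J).erase k) (J.erase k) y2 lam (pcf D lam a k)
            (by
              rw [Finset.card_erase_of_mem (Finset.mem_insert_of_mem hk), Finset.card_insert_of_notMem hlJ]
              have : J.card < Z.card := Finset.card_lt_card ⟨hJ, fun h => hlJ (h hlZ)⟩
              omega)
            (Finset.erase_subset_erase _ (Finset.subset_insert _ _))
            (fun i hi => by
              rcases Finset.mem_insert.1 (Finset.mem_of_mem_erase hi) with rfl | hi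
              · rw [hy2l]; exact mul_ne_zero (neg_ne_zero.2 hc0) (hy _ hlZ)
              · rw [hy2 i hi]; exact hy i (hJ hi))
            (fun i hi => hy2D i (Finset.mem_of_mem_erase hi))
            (fun i hi => hlam i (hins i (Finset.mem_of_mem_erase hi)))
            (fun i hi => hpcf lam a k i (ha i (hins i (Finset.mem_of_mem_erase hi))) (ha k (hJ hk))
              (hlam i (hins i (Finset.mem_of_mem_erase hi))) (hlam k (hJ hk)))
            (by
              rw [Finset.sum_erase _ (by rw [hpk, zero_mul]), pcf_sum D lam a y2 k _ hy2D]
              have : ∑ i ∈ insert l J, a i * y2 i = 0 := by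
                rw [Finset.sum_insert hlJ, hsumJ, hXc, hy2l]; ring
              rw [this]; simp)
            (by
              rw [Finset.sum_erase _ (by rw [hpk, zero_mul]), hsumJ]
              exact hX2)
          have hl'l : l' = l := by
            rcases Finset.mem_insert.1 (Finset.mem_of_mem_erase hl') with h | h
            · exact h
            · exact absurd (Finset.mem_erase.2 ⟨Finset.ne_of_mem_erase hl', h⟩) hlJ'
          subst hl'l
          refine ⟨k', Finset.mem_of_mem_erase hk', l', hlZ, hlJ, r, l2 hr, r', l2 hr', c2 * (-c), h1, h2,
            mul_ne_zero h3 (neg_ne_zero.2 hc0), ?_, ?_⟩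
          · rw [Derivation.leibniz, map_neg, hc, h4]; simp
          · rw [hy2 k' (Finset.mem_of_mem_erase hk'), hy2l] at h5
            linear_combination h5
      · have hsub : ∀ j ∈ Z.erase l, j ∈ Z := fun j hj => Finset.mem_of_mem_erase hj
        obtain ⟨k, hk, l', hl', hlJ', r, hr, r', hr', h⟩ := H2 (Z.erase l) J y lam (pcf D lam a l)
          (by rw [Finset.card_erase_of_mem hlZ]; omega)
          (fun j hj => Finset.mem_erase.2 ⟨by rintro rfl; exact hlJ hj, hJ hj⟩)
          (fun j hj => hy j (hsub j hj)) (fun j hj => hD j (hsub j hj)) (fun j hj => hlam j (hsub j hj))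
          (fun j hj => hpcf lam a l j (ha j (hsub j hj)) (ha l hlZ) (hlam j (hsub j hj)) (hlam l hlZ))
          (by
            rw [Finset.sum_erase _ (by rw [hpl, zero_mul]), pcf_sum D lam a y l _ hD, hsum]; simp)
          hX
        exact ⟨k, hk, l', hsub l' hl', hlJ', r, l2 hr, r', l2 hr', h⟩


lemma pigeon {α β : Type*} {S : Set α} (hS : S.Infinite) (P : α → β → Prop) (F : Set β) (hF : F.Finite)
    (h : ∀ a ∈ S, ∃ b ∈ F, P a b) : ∃ b ∈ F, ∃ S' ⊆ S, S'.Infinite ∧ ∀ a ∈ S', P a b := by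
  by_contra hcon
  push Not at hcon
  apply hS
  have : S ⊆ ⋃ b ∈ F, {a | a ∈ S ∧ P a b} := by
    intro a ha
    obtain ⟨b, hb, hab⟩ := h a ha
    exact mem_biUnion hb ⟨ha, hab⟩
  refine (hF.biUnion fun b hb => ?_).subset this
  by_contra hinf
  obtain ⟨a, ha, hna⟩ := hcon b hb {a | a ∈ S ∧ P a b} (fun a ha => ha.1) hinf
  exact hna ha.2

/-- the constants of a derivation -/
def consts (D : Derivation ℚ ℂ ℂ) : Subfield ℂ where
  carrier := {x | D x = 0}
  mul_mem' := fun {a b} (ha : D a = 0) (hb : D b = 0) => by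
    change D (a * b) = 0
    rw [Derivation.leibniz, ha, hb]; simp
  one_mem' := D.map_one_eq_zero
  add_mem' := fun {a b} (ha : D a = 0) (hb : D b = 0) => by
    change D (a + b) = 0
    rw [map_add, ha, hb, add_zero]
  zero_mem' := map_zero D
  neg_mem' := fun {a} (ha : D a = 0) => by
    change D (-a) = 0
    rw [map_neg, ha, neg_zero]
  inv_mem' := fun a (ha : D a = 0) => by
    change D (a⁻¹) = 0
    rw [Derivation.leibniz_inv, ha, smul_zero]

lemma consts_alg (D : Derivation ℚ ℂ ℂ) (x : ℂ) (hx : IsIntegral (consts D) x) : D x = 0 := by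
  let D' : Derivation (consts D) ℂ ℂ := Derivation.mk'
    { toFun := D
      map_add' := map_add D
      map_smul' := fun r x => by
        have hr : D (r : ℂ) = 0 := r.2
        have : r • x = (r : ℂ) * x := rfl
        rw [this, Derivation.leibniz, hr, smul_zero, add_zero]
        rfl }
    (fun a b => Derivation.leibniz D a b)
  have h := Derivation.map_aeval D' (minpoly (consts D) x) x
  rw [minpoly.aeval, map_zero] at h
  have hs : (minpoly (consts D) x).Separable := (minpoly.irreducible hx).separable
  have h2 := hs.aeval_derivative_ne_zero (minpoly.aeval (consts D) x)
  rcases smul_eq_zero.1 h.symm with h3 | h3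
  · exact absurd h3 h2
  · exact h3

lemma exists_val (t : ℂ) (ht : Transcendental ℚ t) :
    ∃ (D : Derivation ℚ ℂ ℂ) (O : ValuationSubring ℂ), t ∉ O ∧ ∀ c, D c = 0 → c ≠ 0 → O.valuation c = 1 := by
  obtain ⟨D, hD⟩ := exists_derivation t ht
  let R : Subring ℂ := (consts D).toSubring
  have : IsIntegrallyClosedIn R ℂ := by
    rw [isIntegrallyClosedIn_iff]
    refine ⟨Subtype.val_injective, fun {x} hx => ⟨⟨x, ?_⟩, rfl⟩⟩
    exact consts_alg D x hx
  obtain ⟨O, hO, htO⟩ := Subring.exists_le_valuationSubring_of_isIntegrallyClosedIn (x := t) (R := R) hD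
  refine ⟨D, O, htO, fun c hc hc0 => ?_⟩
  have h1 : O.valuation c ≤ 1 := (O.valuation_le_one_iff c).2 (hO (show c ∈ R from hc))
  have h2 : O.valuation c⁻¹ ≤ 1 := (O.valuation_le_one_iff _).2 (hO (show c⁻¹ ∈ R from (consts D).inv_mem hc))
  refine le_antisymm h1 ?_
  rw [map_inv₀] at h2
  exact (inv_le_one₀ (by rw [zero_lt_iff]; exact (Valuation.ne_zero_iff _).2 hc0)).1 h2

lemma val_rat (O : ValuationSubring ℂ) (D : Derivation ℚ ℂ ℂ) (h : ∀ c, D c = 0 → c ≠ 0 → O.valuation c = 1)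
    (q : ℚ) (hq : q ≠ 0) : O.valuation (q : ℂ) = 1 := by
  apply h
  · have := D.map_algebraMap q
    simpa using this
  · exact_mod_cast hq

lemma val_finite (O : ValuationSubring ℂ) (h : ∀ q : ℚ, q ≠ 0 → O.valuation (q : ℂ) = 1)
    (M : Submodule ℚ ℂ) (hM : M.FG) : (O.valuation '' (M : Set ℂ)).Finite := by
  classical
  obtain ⟨s, rfl⟩ := hM
  induction s using Finset.induction_on with
  | empty => simp
  | insert x s hx ih =>
    set M := Submodule.span ℚ (s : Set ℂ)
    have hsub : {γ | γ ∉ O.valuation '' (M : Set ℂ) ∧ ∃ m ∈ M, γ = O.valuation (x + m)}.Subsingleton := by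
      have key : ∀ m ∈ M, ∀ m' ∈ M, O.valuation (x + m') ∉ O.valuation '' (M : Set ℂ) →
          ¬ O.valuation (x + m) < O.valuation (x + m') := by
        intro m hm m' hm' hn hlt
        apply hn
        refine ⟨m - m', M.sub_mem hm hm', ?_⟩
        rw [← Valuation.map_sub_eq_of_lt_right _ hlt]
        congr 1; ring
      rintro γ ⟨hγ, m, hm, rfl⟩ γ' ⟨hγ', m', hm', rfl⟩
      exact le_antisymm (not_lt.1 (key m' hm' m hm hγ)) (not_lt.1 (key m hm m' hm' hγ'))
    refine (ih.union hsub.finite).subset ?_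
    rintro _ ⟨v, hv, rfl⟩
    rw [Finset.coe_insert, SetLike.mem_coe, Submodule.mem_span_insert] at hv
    obtain ⟨q, m, hm, rfl⟩ := hv
    by_cases hq : q = 0
    · left; refine ⟨m, hm, ?_⟩; rw [hq, zero_smul, zero_add]
    · have e : O.valuation (q • x + m) = O.valuation (x + q⁻¹ • m) := by
        have : q • x + m = (q : ℂ) * (x + q⁻¹ • m) := by
          have : (q : ℂ) ≠ 0 := by exact_mod_cast hq
          rw [Rat.smul_def, Rat.smul_def]; push_cast; field_simp
        rw [this, map_mul, h q hq, one_mul]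
      rw [e]
      by_cases hin : O.valuation (x + q⁻¹ • m) ∈ O.valuation '' (M : Set ℂ)
      · exact Or.inl hin
      · exact Or.inr ⟨hin, _, M.smul_mem _ hm, rfl⟩

/-- logarithms of units of the valuation -/
def valSub (O : ValuationSubring ℂ) : Submodule ℚ ℂ where
  carrier := {v | O.valuation (Complex.exp v) = 1}
  add_mem' := fun {a b} (ha : O.valuation (Complex.exp a) = 1) (hb : O.valuation (Complex.exp b) = 1) => by
    change O.valuation (Complex.exp (a + b)) = 1
    rw [Complex.exp_add, map_mul, ha, hb, one_mul]
  zero_mem' := by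
    change O.valuation (Complex.exp 0) = 1
    rw [Complex.exp_zero, map_one]
  smul_mem' := fun q x (hx : O.valuation (Complex.exp x) = 1) => by
    change O.valuation (Complex.exp (q • x)) = 1
    have h1 : Complex.exp (q • x) ^ q.den = Complex.exp x ^ q.num := by
      rw [← Complex.exp_nat_mul, ← Complex.exp_int_mul, Rat.smul_def, ← mul_assoc]
      congr 2
      exact_mod_cast Rat.den_mul_eq_num q
    have h2 := congrArg O.valuation h1
    rw [map_pow, map_zpow₀, hx, one_zpow] at h2
    exact (pow_eq_one_iff.1 h2).resolve_right q.den_nz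

/-- logarithmic derivative of the exponential, as a rational-linear map -/
def dlog (D : Derivation ℚ ℂ ℂ) : ℂ →+ ℂ where
  toFun v := D (Complex.exp v) / Complex.exp v
  map_zero' := by simp
  map_add' a b := by
    have ha := Complex.exp_ne_zero a
    have hb := Complex.exp_ne_zero b
    rw [Complex.exp_add, Derivation.leibniz]
    simp only [smul_eq_mul]
    field_simp
    ring

lemma alg_step (I : Finset ℂ) (c : ℂ → ℂ) (hc : ∀ b ∈ I, c b ≠ 0) (S : Set ℂ) (hS : S.Infinite)
    (hnd : ∀ z ∈ S, NonDeg I (fun b => c b * Complex.exp (b * z)))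
    (V : Submodule ℚ ℂ) (hV : V.FG) (hSV : ∀ z ∈ S, ∀ b ∈ I, ∀ b' ∈ I, (b - b') * z ∈ V)
    (hmin : ∀ S' ⊆ S, S'.Infinite → ∀ X : Submodule ℚ ℂ, (∀ z ∈ S', ∀ z' ∈ S', z - z' ∈ X) →
      ∀ z ∈ S, ∀ z' ∈ S, z - z' ∈ X) :
    ∀ z ∈ S, ∀ z' ∈ S, ∀ b ∈ I, ∀ b' ∈ I, Complex.exp ((b - b') * (z - z')) ∈ acl ∅ := by
  classical
  intro z₁ hz₁ z₂ hz₂ b₁ hb₁ b₂ hb₂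
  by_contra hnot
  have ht : Transcendental ℚ (Complex.exp ((b₁ - b₂) * (z₁ - z₂))) := fun h => hnot (isAlgebraic_mem_acl h)
  obtain ⟨D, O, htO, hval⟩ := exists_val _ ht
  let T := valSub O
  let J : Finset ℂ := I.filter (fun k => ∀ z ∈ S, ∀ z' ∈ S, (k - b₁) * (z - z') ∈ T)
  have hJI : J ⊆ I := Finset.filter_subset _ _
  have hb1J : b₁ ∈ J := Finset.mem_filter.2 ⟨hb₁, fun z _ z' _ => by rw [sub_self, zero_mul]; exact T.zero_mem⟩
  have hb2J : b₂ ∉ J := by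
    intro h
    have h1 := (Finset.mem_filter.1 h).2 z₁ hz₁ z₂ hz₂
    have h2 := T.neg_mem h1
    rw [← neg_mul, neg_sub] at h2
    have h3 : O.valuation (Complex.exp ((b₁ - b₂) * (z₁ - z₂))) = 1 := h2
    exact htO ((O.valuation_le_one_iff _).1 h3.le)
  have hJne : J ≠ I := by rintro h; rw [h] at hb2J; exact hb2J hb₂
  let L : ℂ →ₗ[ℚ] ℂ := (dlog D).toRatLinearMap
  let E : Submodule ℚ ℂ := V.map L ⊔ Submodule.span ℚ (I.image (fun b => D (c b) / c b) : Set ℂ)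
  have hE : E.FG := (hV.map L).sup ⟨_, rfl⟩
  obtain ⟨M, hM, HM⟩ := elim D (ι := ℂ) I.card (Submodule.span ℚ {1}) E (Submodule.fg_span_singleton _) hE
  have hfin := val_finite O (val_rat O D hval) M hM
  let F : Set (ℂ × ℂ × O.ValueGroup × O.ValueGroup) :=
    (I : Set ℂ) ×ˢ (I : Set ℂ) ×ˢ (O.valuation '' (M : Set ℂ)) ×ˢ (O.valuation '' (M : Set ℂ))
  have hF : F.Finite := I.finite_toSet.prod (I.finite_toSet.prod (hfin.prod hfin))
  have hsel : ∀ z ∈ S, ∃ p ∈ F, p.1 ∈ J ∧ p.2.1 ∉ J ∧ p.2.2.1 ≠ 0 ∧ p.2.2.2 ≠ 0 ∧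
      p.2.2.1 * O.valuation (c p.1 * Complex.exp (p.1 * z)) = p.2.2.2 * O.valuation (c p.2.1 * Complex.exp (p.2.1 * z)) := by
    intro z hz
    have hy : ∀ b, c b * Complex.exp ((b - b₁) * z) = Complex.exp (-(b₁ * z)) * (c b * Complex.exp (b * z)) := by
      intro b
      rw [mul_left_comm, ← Complex.exp_add]; congr 2; ring
    obtain ⟨k, hk, l, hl, hlJ, r, hr, r', hr', d, h1, h2, h3, h4, h5⟩ :=
      HM I J (fun b => c b * Complex.exp ((b - b₁) * z))
      (fun b => dlog D ((b - b₁) * z) + D (c b) / c b) (fun _ => 1) le_rfl hJI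
      (fun b hb => mul_ne_zero (hc b hb) (Complex.exp_ne_zero _))
      (fun b hb => by
        change D _ = (D (Complex.exp ((b - b₁) * z)) / Complex.exp ((b - b₁) * z) + _) * _
        rw [Derivation.leibniz]
        simp only [smul_eq_mul]
        have := hc b hb
        have := Complex.exp_ne_zero ((b - b₁) * z)
        field_simp
        )
      (fun b hb => E.add_mem ((le_sup_left : _ ≤ E) (Submodule.mem_map_of_mem (f := L) (hSV z hz b hb b₁ hb₁)))
        ((le_sup_right : _ ≤ E) (Submodule.subset_span (by
          rw [Finset.coe_image]; exact ⟨b, hb, rfl⟩))))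
      (fun _ _ => Submodule.mem_span_singleton_self 1)
      (by simp only [one_mul, hy]; rw [← Finset.mul_sum, (hnd z hz).1, mul_zero])
      (by
        simp only [one_mul, hy]; rw [← Finset.mul_sum]
        exact mul_ne_zero (Complex.exp_ne_zero _) ((hnd z hz).2 J hJI ⟨_, hb1J⟩ hJne))
    refine ⟨(k, l, O.valuation r, O.valuation r'), ⟨hJI hk, hl, ⟨r, hr, rfl⟩, ⟨r', hr', rfl⟩⟩, hk, hlJ,
      (Valuation.ne_zero_iff _).2 h1, (Valuation.ne_zero_iff _).2 h2, ?_⟩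
    simp only [hy] at h5
    have h6 : r * (c k * Complex.exp (k * z)) = d * (r' * (c l * Complex.exp (l * z))) := by
      apply mul_left_cancel₀ (Complex.exp_ne_zero (-(b₁ * z)))
      linear_combination h5
    have h7 := congrArg O.valuation h6
    rw [map_mul, map_mul _ d, hval d h4 h3, one_mul, map_mul _ r'] at h7
    exact h7
  obtain ⟨⟨k, l, γ, γ'⟩, hp, S', hS', hS'inf, hcon⟩ := pigeon hS _ F hF hsel
  obtain ⟨hkI, hlI, -, -⟩ := hp
  obtain ⟨z0, hz0⟩ := hS'inf.nonempty
  have hkJ := (hcon z0 hz0).1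
  have hlJ := (hcon z0 hz0).2.1
  simp only at hkJ hlJ
  apply hlJ
  let X : Submodule ℚ ℂ := T.comap (LinearMap.mulLeft ℚ (k - l))
  have hX := hmin S' hS' hS'inf X (by
    intro z hz z' hz'
    obtain ⟨-, -, g1, g2, e1⟩ := hcon z hz
    obtain ⟨-, -, -, -, e2⟩ := hcon z' hz'
    simp only at g1 g2 e1 e2
    change O.valuation (Complex.exp ((k - l) * (z - z'))) = 1
    have e3 : Complex.exp ((k - l) * (z - z')) =
      (Complex.exp (k * z) / Complex.exp (l * z)) / (Complex.exp (k * z') / Complex.exp (l * z')) := by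
      rw [← Complex.exp_sub, ← Complex.exp_sub, ← Complex.exp_sub]; congr 1; ring
    rw [e3, map_div₀, map_div₀, map_div₀]
    rw [map_mul, map_mul] at e1 e2
    have v1 : ∀ w, O.valuation (Complex.exp w) ≠ 0 := fun w => (Valuation.ne_zero_iff _).2 (Complex.exp_ne_zero _)
    have v2 : O.valuation (c k) ≠ 0 := (Valuation.ne_zero_iff _).2 (hc k hkI)
    have v3 : O.valuation (c l) ≠ 0 := (Valuation.ne_zero_iff _).2 (hc l hlI)
    have f1 : ∀ w, γ * (O.valuation (c k) * O.valuation (Complex.exp (k * w))) = γ' * (O.valuation (c l) * O.valuation (Complex.exp (l * w))) →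
        O.valuation (Complex.exp (k * w)) / O.valuation (Complex.exp (l * w)) = (γ' * O.valuation (c l)) / (γ * O.valuation (c k)) := by
      intro w hw
      rw [div_eq_div_iff (v1 _) (mul_ne_zero g1 v2)]
      calc _ = γ * (O.valuation (c k) * O.valuation (Complex.exp (k * w))) := by
            rw [mul_comm, mul_assoc]
        _ = _ := by rw [hw, mul_assoc]
    rw [f1 z e1, f1 z' e2, div_self]
    exact div_ne_zero (mul_ne_zero g2 v3) (mul_ne_zero g1 v2))
  refine Finset.mem_filter.2 ⟨hlI, fun z hz z' hz' => ?_⟩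
  have t1 := (Finset.mem_filter.1 hkJ).2 z hz z' hz'
  have t2 : (k - l) * (z - z') ∈ T := hX z hz z' hz'
  have := T.sub_mem t1 t2
  convert this using 1
  ring


lemma fact_dvd (p : ℕ) (hp : p.Prime) (J e j s : ℕ) (he : e = padicValNat p J.factorial) (hj : j ≤ J) (hs : s ≤ j) :
    p ^ (e + s) ∣ p ^ (2 * j) * (J.factorial / j.factorial) := by
  have : Fact p.Prime := ⟨hp⟩
  have hd : j.factorial ∣ J.factorial := Nat.factorial_dvd_factorial hj
  have h0 : J.factorial / j.factorial ≠ 0 := by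
    rw [Ne, Nat.div_eq_zero_iff]
    push Not
    exact ⟨Nat.factorial_ne_zero _, Nat.factorial_le hj⟩
  have hp0 : p ^ (2 * j) ≠ 0 := pow_ne_zero _ hp.ne_zero
  rw [padicValNat_dvd_iff_le (mul_ne_zero hp0 h0), padicValNat.mul hp0 h0, padicValNat.div_of_dvd hd,
    padicValNat.prime_pow, ← he]
  have h1 := sub_one_mul_padicValNat_factorial (p := p) j
  have h2 : padicValNat p j.factorial ≤ j := by
    have : 1 ≤ p - 1 := by have := hp.two_le; omega
    calc padicValNat p j.factorial = 1 * padicValNat p j.factorial := (one_mul _).symm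
      _ ≤ (p - 1) * padicValNat p j.factorial := Nat.mul_le_mul_right _ this
      _ ≤ j := by rw [h1]; omega
  omega

lemma degCmul {A : Type*} [CommRing A] (a : A) (q : Polynomial A) : (Polynomial.C a * q).degree ≤ q.degree := by
  rw [← Polynomial.smul_eq_C_mul]; exact Polynomial.degree_smul_le _ _

lemma hansel_dvd {A : Type*} [CommRing A] [IsDomain A] [CharZero A] (p : ℕ) (hp : p.Prime)
    (d : ℕ → A) (J : ℕ) (Z : Finset ℕ) (F : ℕ → A)
    (hF : ∀ m ≤ J, F m = ∑ j ∈ Finset.range (J + 1), (m.choose j : A) * (p : A) ^ (2 * j) * d j)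
    (hZJ : ∀ n ∈ Z, n ≤ J) (hZ : ∀ n ∈ Z, F n = 0) (n₀ : ℕ) (hn₀ : n₀ ≤ J) :
    (p : A) ^ Z.card ∣ F n₀ := by
  classical
  set s := Z.card with hs
  set e := padicValNat p J.factorial with he
  let a : ℕ → A := fun j => ((p ^ (2 * j) * (J.factorial / j.factorial) : ℕ) : A) * d j
  let P : Polynomial A := ∑ j ∈ Finset.range (J + 1), Polynomial.C (a j) * descPochhammer A j
  have hP : ∀ m ≤ J, P.eval (m : A) = (J.factorial : A) * F m := by
    intro m hm
    rw [hF m hm, Finset.mul_sum, Polynomial.eval_finsetSum]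
    refine Finset.sum_congr rfl fun j hj => ?_
    have hjJ : j ≤ J := by simpa [Nat.lt_succ_iff] using hj
    rw [Polynomial.eval_mul, Polynomial.eval_C, descPochhammer_eval_eq_descFactorial,
      Nat.descFactorial_eq_factorial_mul_choose]
    have h1 : J.factorial / j.factorial * j.factorial = J.factorial := Nat.div_mul_cancel (Nat.factorial_dvd_factorial hjJ)
    simp only [a]
    rw [← h1]
    push_cast
    rw [Nat.mul_div_cancel _ (Nat.factorial_pos j)]
    ring
  let M : Polynomial A := ∏ n ∈ Z, (Polynomial.X - Polynomial.C (n : A))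
  have hM : M.Monic := Polynomial.monic_prod_of_monic _ _ fun n _ => Polynomial.monic_X_sub_C _
  have hMdeg : M.natDegree = s := by
    simp only [M]
    rw [Polynomial.natDegree_prod_of_monic _ _ (fun n _ => Polynomial.monic_X_sub_C _)]
    simp only [Polynomial.natDegree_X_sub_C]
    simp [hs]
  have hMP : M ∣ P := by
    have hr : ∀ n ∈ Z, P.eval (n : A) = 0 := fun n hn => by rw [hP n (hZJ n hn), hZ n hn, mul_zero]
    clear_value P
    have : ∀ (Z : Finset ℕ) (P : Polynomial A), (∀ n ∈ Z, P.eval (n : A) = 0) →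
        ∏ n ∈ Z, (Polynomial.X - Polynomial.C (n : A)) ∣ P := by
      intro Z
      induction Z using Finset.induction_on with
      | empty => intro P _; simp
      | insert n Z hn ih =>
        intro P hP
        obtain ⟨Q, hQ⟩ := Polynomial.dvd_iff_isRoot.2 (hP n (Finset.mem_insert_self _ _))
        rw [Finset.prod_insert hn, hQ]
        refine mul_dvd_mul_left _ (ih Q fun m hm => ?_)
        have := hP m (Finset.mem_insert_of_mem hm)
        rw [hQ, Polynomial.eval_mul] at this
        refine (mul_eq_zero.1 this).resolve_left ?_
        simp only [Polynomial.eval_sub, Polynomial.eval_X, Polynomial.eval_C]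
        intro h
        rw [sub_eq_zero] at h
        have : m = n := by exact_mod_cast h
        exact hn (this ▸ hm)
    exact this Z P hr
  let Pl : Polynomial A := ∑ j ∈ (Finset.range (J + 1)).filter (fun j => j < s), Polynomial.C (a j) * descPochhammer A j
  have hPl : Pl.degree < M.degree := by
    rw [Polynomial.degree_eq_natDegree hM.ne_zero, hMdeg]
    rw [← Polynomial.mem_degreeLT]
    refine Submodule.sum_mem _ fun j hj => ?_
    rw [Polynomial.mem_degreeLT]
    refine lt_of_le_of_lt (degCmul _ _) ?_
    refine lt_of_le_of_lt Polynomial.degree_le_natDegree ?_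
    rw [descPochhammer_natDegree]
    exact_mod_cast (Finset.mem_filter.1 hj).2
  have hhigh : ∃ G : Polynomial A, P = Pl + Polynomial.C ((p : A) ^ (e + s)) * G := by
    have : Polynomial.C ((p : A) ^ (e + s)) ∣
        ∑ j ∈ (Finset.range (J + 1)).filter (fun j => ¬ j < s), Polynomial.C (a j) * descPochhammer A j := by
      refine Finset.dvd_sum fun j hj => Dvd.dvd.mul_right (map_dvd Polynomial.C ?_) _
      have h1 := Finset.mem_filter.1 hj
      have := fact_dvd p hp J e j s he (by simpa [Nat.lt_succ_iff] using h1.1) (not_lt.1 h1.2)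
      have h2 : ((p ^ (e + s) : ℕ) : A) ∣ ((p ^ (2 * j) * (J.factorial / j.factorial) : ℕ) : A) := Nat.cast_dvd_cast this
      rw [Nat.cast_pow] at h2
      exact h2.mul_right _
    obtain ⟨G, hG⟩ := this
    refine ⟨G, ?_⟩
    rw [← hG]
    exact (Finset.sum_filter_add_sum_filter_not _ _ _).symm
  obtain ⟨G, hG⟩ := hhigh
  have hdiv : P = Polynomial.C ((p : A) ^ (e + s)) * (M * (G /ₘ M)) := by
    have h1 := Polynomial.modByMonic_add_div G M
    have h2 : M ∣ Pl + Polynomial.C ((p : A) ^ (e + s)) * (G %ₘ M) := by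
      have : Pl + Polynomial.C ((p : A) ^ (e + s)) * (G %ₘ M) = P - M * (Polynomial.C ((p : A) ^ (e + s)) * (G /ₘ M)) := by
        rw [hG]; nth_rewrite 2 [← h1]; ring
      rw [this]
      exact dvd_sub hMP (Dvd.intro _ rfl)
    have h3 : Pl + Polynomial.C ((p : A) ^ (e + s)) * (G %ₘ M) = 0 := by
      refine Polynomial.eq_zero_of_dvd_of_degree_lt h2 ?_
      refine lt_of_le_of_lt (Polynomial.degree_add_le _ _) (max_lt hPl ?_)
      exact lt_of_le_of_lt (degCmul _ _) (Polynomial.degree_modByMonic_lt _ hM)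
    rw [hG]; nth_rewrite 1 [← h1]
    linear_combination h3
  have hev : (J.factorial : A) * F n₀ = (p : A) ^ (e + s) * (M * (G /ₘ M)).eval (n₀ : A) := by
    rw [← hP n₀ hn₀, hdiv, Polynomial.eval_mul, Polynomial.eval_C]
  have : Fact p.Prime := ⟨hp⟩
  obtain ⟨u, hu⟩ : p ^ e ∣ J.factorial := pow_padicValNat_dvd
  have hpu : Nat.Coprime p u := by
    rw [hp.coprime_iff_not_dvd]
    intro hdvd
    have : p ^ (e + 1) ∣ J.factorial := by rw [hu, pow_succ]; exact mul_dvd_mul_left _ hdvd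
    exact pow_succ_padicValNat_not_dvd (Nat.factorial_ne_zero J) this
  have hpA : ((p : A)) ^ e ≠ 0 := pow_ne_zero _ (by exact_mod_cast hp.ne_zero)
  have h4 : (u : A) * F n₀ = (p : A) ^ s * (M * (G /ₘ M)).eval (n₀ : A) := by
    apply mul_left_cancel₀ hpA
    rw [hu] at hev
    push_cast at hev
    rw [pow_add] at hev
    linear_combination hev
  have hcop : IsCoprime ((p : A) ^ s) (u : A) := by
    have h5 : IsCoprime ((p : ℤ)) (u : ℤ) := Nat.isCoprime_iff_coprime.2 hpu
    have h6 := (h5.map (Int.castRingHom A)).pow_left (m := s)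
    simpa using h6
  exact hcop.dvd_of_dvd_mul_left ⟨_, h4⟩

lemma hansel {A : Type*} [CommRing A] [IsDomain A] [CharZero A] [IsNoetherianRing A] (p : ℕ) (hp : p.Prime)
    (hpu : ¬ IsUnit (p : A)) {ι : Type*} (I : Finset ι) (c b : ι → A)
    (hinf : {n : ℕ | ∑ k ∈ I, c k * (1 + (p : A) ^ 2 * b k) ^ n = 0}.Infinite) (n₀ : ℕ) :
    ∑ k ∈ I, c k * (1 + (p : A) ^ 2 * b k) ^ n₀ = 0 := by
  classical
  set F : ℕ → A := fun n => ∑ k ∈ I, c k * (1 + (p : A) ^ 2 * b k) ^ n with hFdef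
  have key : ∀ s : ℕ, (p : A) ^ s ∣ F n₀ := by
    intro s
    obtain ⟨Z, hZ, hZc⟩ := hinf.exists_subset_card_eq s
    have hF : ∀ J m, m ≤ J → F m = ∑ j ∈ Finset.range (J + 1), (m.choose j : A) * (p : A) ^ (2 * j) * ∑ k ∈ I, c k * b k ^ j := by
      intro J m hm
      simp only [hFdef, Finset.mul_sum]
      rw [Finset.sum_comm]
      refine Finset.sum_congr rfl fun k _ => ?_
      rw [add_comm, add_pow, Finset.mul_sum]
      have : Finset.range (m + 1) ⊆ Finset.range (J + 1) := Finset.range_mono (by omega)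
      rw [← Finset.sum_subset this]
      · refine Finset.sum_congr rfl fun j _ => ?_
        rw [one_pow, mul_pow, ← pow_mul]; ring
      · intro j _ hj
        rw [Nat.choose_eq_zero_of_lt (by simpa using hj)]; simp
    let J := n₀ + ∑ n ∈ Z, n
    have := hansel_dvd p hp (fun j => ∑ k ∈ I, c k * b k ^ j) J Z F (hF J)
      (fun n hn => (Finset.single_le_sum (f := fun n => n) (fun _ _ => Nat.zero_le _) hn).trans (Nat.le_add_left _ _))
      (fun n hn => hZ hn) n₀ (Nat.le_add_right _ _)
    rwa [hZc] at this
  have hk := Ideal.iInf_pow_eq_bot_of_isDomain (Ideal.span {(p : A)}) (by rwa [Ne, Ideal.span_singleton_eq_top])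
  have : F n₀ ∈ (⨅ i : ℕ, Ideal.span {(p : A)} ^ i) := by
    rw [Submodule.mem_iInf]
    intro i
    rw [Ideal.span_singleton_pow, Ideal.mem_span_singleton]
    exact key i
  rw [hk] at this
  simpa using this


lemma int_mult {K : Type*} [Field K] [NumberField K] {ι : Type*} (I : Finset ι) (α : ι → K) :
    ∃ d : NumberField.RingOfIntegers K, d ≠ 0 ∧ ∃ γ : ι → NumberField.RingOfIntegers K, ∀ k ∈ I, (γ k : K) = d * α k := by
  classical
  obtain ⟨b, hb⟩ := IsLocalization.exist_integer_multiples (nonZeroDivisors (NumberField.RingOfIntegers K)) I α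
  have : ∀ k ∈ I, ∃ g : NumberField.RingOfIntegers K, (g : K) = (b : NumberField.RingOfIntegers K) * α k := by
    intro k hk
    obtain ⟨g, hg⟩ := hb k hk
    exact ⟨g, by rw [← Algebra.smul_def]; exact hg⟩
  choose! γ hγ using this
  exact ⟨b, nonZeroDivisors.coe_ne_zero b, γ, hγ⟩

lemma hansel_nf {K : Type*} [Field K] [NumberField K] {ι : Type*} (I : Finset ι) (α : ι → K)
    (hα : ∀ k ∈ I, α k ≠ 0) : ∃ f : ℕ, f ≠ 0 ∧ ∀ (c : ι → K) (r : ℕ),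
      {n : ℕ | ∑ k ∈ I, c k * α k ^ (r + f * n) = 0}.Infinite → ∀ n : ℕ, ∑ k ∈ I, c k * α k ^ (r + f * n) = 0 := by
  classical
  let A := NumberField.RingOfIntegers K
  obtain ⟨d, hd, γ, hγ⟩ := int_mult I α
  have hd' : (d : K) ≠ 0 := by
    rw [Ne, NumberField.RingOfIntegers.coe_eq_zero_iff]; exact hd
  have hγ0 : ∀ k ∈ I, γ k ≠ 0 := by
    intro k hk h
    have := hγ k hk
    rw [h] at this
    simp only [map_zero] at this
    exact mul_ne_zero hd' (hα k hk) this.symm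
  let Γ : A := ∏ k ∈ I, γ k
  have hΓ : Γ ≠ 0 := Finset.prod_ne_zero_iff.2 hγ0
  let N := Ideal.absNorm (Ideal.span {Γ})
  have hN0 : N ≠ 0 := by
    rw [Ne, Ideal.absNorm_eq_zero_iff, Ideal.span_singleton_eq_bot]; exact hΓ
  have hNΓ : Γ ∣ (N : A) := Ideal.mem_span_singleton.1 (Ideal.absNorm_mem (Ideal.span {Γ}))
  obtain ⟨p, hpN, hp⟩ := Nat.exists_infinite_primes (N + 1)
  have hcop : Nat.Coprime N (p ^ 2) := by
    apply Nat.Coprime.pow_right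
    rw [Nat.coprime_comm, hp.coprime_iff_not_dvd]
    intro h
    have := Nat.le_of_dvd (Nat.pos_of_ne_zero hN0) h
    omega
  have hpu : ¬ IsUnit (p : A) := by
    intro h
    have h1 := h.map (Algebra.norm ℤ)
    have h2 : Algebra.norm ℤ (p : A) = (p : ℤ) ^ Module.finrank ℤ A := by
      have := Algebra.norm_algebraMap (S := A) (p : ℤ)
      simpa using this
    rw [h2] at h1
    have h3 : Module.finrank ℤ A ≠ 0 := by
      rw [NumberField.RingOfIntegers.rank]; exact Module.finrank_pos.ne'
    rw [isUnit_pow_iff h3, Int.isUnit_iff_natAbs_eq] at h1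
    simp at h1
    exact hp.one_lt.ne' h1
  let P : Ideal A := Ideal.span {(p : A) ^ 2}
  have hP : P ≠ ⊥ := by
    rw [Ne, Ideal.span_singleton_eq_bot]
    exact pow_ne_zero _ (by exact_mod_cast hp.ne_zero)
  have hfin : Finite (A ⧸ P) := Ideal.finiteQuotientOfFreeOfNeBot P hP
  have hunit : ∀ k ∈ I, IsUnit (Ideal.Quotient.mk P (γ k)) := by
    intro k hk
    have h1 : IsCoprime ((N : ℤ)) ((p ^ 2 : ℕ) : ℤ) := Nat.isCoprime_iff_coprime.2 hcop
    have h2 := h1.map (Int.castRingHom A)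
    obtain ⟨u, v, huv⟩ := h2
    have h3 : (γ k) ∣ (N : A) := (Finset.dvd_prod_of_mem γ hk).trans hNΓ
    obtain ⟨x, hx⟩ := h3
    have h4 : Ideal.Quotient.mk P ((p : A) ^ 2) = 0 :=
      Ideal.Quotient.eq_zero_iff_mem.2 (Ideal.mem_span_singleton_self _)
    have h5 := congrArg (Ideal.Quotient.mk P) huv
    simp only [eq_intCast, Int.cast_natCast, Nat.cast_pow, Int.cast_pow] at h5
    rw [hx, map_add, map_mul _ v, h4, mul_zero, add_zero, map_one] at h5
    apply IsUnit.of_mul_eq_one (Ideal.Quotient.mk P (u * x))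
    rw [← h5, ← map_mul]; congr 1; ring
  let f := Nat.card (A ⧸ P)ˣ
  have hf : f ≠ 0 := Nat.card_pos.ne'
  have hb : ∀ k ∈ I, ∃ b : A, γ k ^ f = 1 + (p : A) ^ 2 * b := by
    intro k hk
    obtain ⟨u, hu⟩ := hunit k hk
    have h1 : u ^ f = 1 := pow_card_eq_one'
    have h2 : Ideal.Quotient.mk P (γ k ^ f) = Ideal.Quotient.mk P 1 := by
      rw [map_pow, ← hu, map_one]; 
      have h9 := congrArg Units.val h1
      rwa [Units.val_pow_eq_pow_val, Units.val_one] at h9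
    rw [Ideal.Quotient.eq, Ideal.mem_span_singleton] at h2
    obtain ⟨b, hb⟩ := h2
    exact ⟨b, by rw [← hb]; ring⟩
  choose! b hb using hb
  refine ⟨f, hf, fun c r hinf n => ?_⟩
  obtain ⟨e, he, C, hC⟩ := int_mult I c
  have he' : (e : K) ≠ 0 := by
    rw [Ne, NumberField.RingOfIntegers.coe_eq_zero_iff]; exact he
  have key : ∀ n, algebraMap (NumberField.RingOfIntegers K) K (∑ k ∈ I, (C k * γ k ^ r) * (1 + (p : A) ^ 2 * b k) ^ n) =
      ((e : K) * (d : K) ^ (r + f * n)) * ∑ k ∈ I, c k * α k ^ (r + f * n) := by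
    intro n
    rw [Finset.mul_sum, map_sum]
    refine Finset.sum_congr rfl fun k hk => ?_
    rw [← hb k hk, map_mul, map_mul, map_pow, map_pow, map_pow]
    refine (congrArg₂ (fun x y : K => x * y ^ r * (y ^ f) ^ n) (hC k hk) (hγ k hk)).trans ?_
    ring
  have hiff : ∀ n, ∑ k ∈ I, (C k * γ k ^ r) * (1 + (p : A) ^ 2 * b k) ^ n = 0 ↔ ∑ k ∈ I, c k * α k ^ (r + f * n) = 0 := by
    intro n
    rw [← NumberField.RingOfIntegers.coe_eq_zero_iff, key n]
    constructor
    · intro h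
      exact (mul_eq_zero.1 h).resolve_left (mul_ne_zero he' (pow_ne_zero _ hd'))
    · intro h; rw [h, mul_zero]
  rw [← hiff]
  apply hansel p hp hpu
  simpa only [hiff] using hinf

lemma sml {ι : Type*} (I : Finset ι) (α c : ι → ℂ) (hα : ∀ k ∈ I, IsAlgebraic ℚ (α k)) (hα0 : ∀ k ∈ I, α k ≠ 0)
    (T : Set ℕ) (hT : T.Infinite) (hnd : ∀ n ∈ T, NonDeg I (fun k => c k * α k ^ n)) :
    ∀ k ∈ I, ∀ l ∈ I, ∃ f : ℕ, f ≠ 0 ∧ α k ^ f = α l ^ f := by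
  classical
  let K := IntermediateField.adjoin ℚ (α '' (I : Set ι))
  have hfs : Finite (α '' (I : Set ι)) := (I.finite_toSet.image α).to_subtype
  have hfd : FiniteDimensional ℚ K := IntermediateField.finiteDimensional_adjoin (by
    rintro _ ⟨k, hk, rfl⟩
    exact (hα k hk).isIntegral)
  have hnf : NumberField K := ⟨⟩
  have hmem : ∀ k ∈ I, α k ∈ K := fun k hk => IntermediateField.subset_adjoin _ _ ⟨k, hk, rfl⟩
  let a : ι → K := fun k => if h : k ∈ I then ⟨α k, hmem k h⟩ else 0
  have ha : ∀ k ∈ I, (a k : ℂ) = α k := fun k hk => by simp [a, hk]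
  obtain ⟨f, hf, H⟩ := hansel_nf I a (fun k hk h => hα0 k hk (by rw [← ha k hk, h]; rfl))
  obtain ⟨r, hr, T', hT', hT'inf, hTr⟩ := pigeon hT (fun n r => n % f = r) (Set.Iio f) (Set.finite_Iio f)
    (fun n _ => ⟨n % f, Nat.mod_lt _ (Nat.pos_of_ne_zero hf), rfl⟩)
  have hinf : {n : ℕ | ∑ k ∈ I, c k * α k ^ (r + f * n) = 0}.Infinite := by
    have : (fun n => n / f) '' T' ⊆ {n : ℕ | ∑ k ∈ I, c k * α k ^ (r + f * n) = 0} := by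
      rintro _ ⟨n, hn, rfl⟩
      have e : r + f * (n / f) = n := by rw [← hTr n hn]; exact Nat.mod_add_div n f
      change ∑ k ∈ I, c k * α k ^ (r + f * (n / f)) = 0
      rw [e]
      exact (hnd n (hT' hn)).1
    refine Set.Infinite.mono this (hT'inf.image ?_)
    intro n hn m hm h
    rw [← Nat.mod_add_div n f, ← Nat.mod_add_div m f, hTr n hn, hTr m hm]
    simp only at h
    rw [h]
  have hφ : ∀ (φ : Module.Dual K ℂ) (n : ℕ), φ (∑ k ∈ I, c k * α k ^ n) = ∑ k ∈ I, φ (c k) * a k ^ n := by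
    intro φ n
    rw [map_sum]
    refine Finset.sum_congr rfl fun k hk => ?_
    have : c k * α k ^ n = (a k ^ n) • c k := by
      rw [IntermediateField.smul_def, ← ha k hk, smul_eq_mul, mul_comm]; rfl
    rw [this, map_smul, smul_eq_mul, mul_comm]
  have hall : ∀ n : ℕ, ∑ k ∈ I, c k * α k ^ (r + f * n) = 0 := by
    intro n
    rw [← Module.forall_dual_apply_eq_zero_iff K]
    intro φ
    rw [hφ]
    apply H
    refine hinf.mono ?_
    intro m (hm : _ = _)
    change _ = _
    rw [← hφ, hm, map_zero]
  intro k hk l hl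
  refine ⟨f, hf, ?_⟩
  obtain ⟨n₀, hn₀⟩ := hT'inf.nonempty
  have e₀ : r + f * (n₀ / f) = n₀ := by rw [← hTr n₀ hn₀]; exact Nat.mod_add_div n₀ f
  let χ : ι → (Multiplicative ℕ →* ℂ) := fun k => powersHom ℂ (α k ^ f)
  have hχ : ∀ k n, χ k (Multiplicative.ofAdd n) = (α k ^ f) ^ n := fun k n => rfl
  have h1 := char_group I χ (fun k => c k * α k ^ r) (by
    intro g
    have := hall (Multiplicative.toAdd g)
    rw [← this]
    refine Finset.sum_congr rfl fun k _ => ?_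
    rw [pow_add, pow_mul, ← mul_assoc]
    rfl) (fun ψ => ψ = χ k)
  have h2 : ∑ i ∈ I with χ i = χ k, c i * α i ^ n₀ = 0 := by
    have : ∀ i ∈ I.filter (fun i => χ i = χ k), c i * α i ^ n₀ = (c i * α i ^ r) * (α k ^ f) ^ (n₀ / f) := by
      intro i hi
      have e1 := DFunLike.congr_fun (Finset.mem_filter.1 hi).2 (Multiplicative.ofAdd (n₀ / f))
      rw [hχ, hχ] at e1
      rw [← e1, mul_assoc, ← pow_mul, ← pow_add, e₀]
    rw [Finset.sum_congr rfl this, ← Finset.sum_mul, h1, zero_mul]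
  have h3 : I.filter (fun i => χ i = χ k) = I := by
    by_contra hne
    exact (hnd n₀ (hT' hn₀)).2 (I.filter (fun i => χ i = χ k)) (Finset.filter_subset _ _) ⟨k, Finset.mem_filter.2 ⟨hk, rfl⟩⟩ hne h2
  have h4 : l ∈ I.filter (fun i => χ i = χ k) := by rw [h3]; exact hl
  have h5 := DFunLike.congr_fun (Finset.mem_filter.1 h4).2 (Multiplicative.ofAdd 1)
  rw [hχ, hχ, pow_one, pow_one] at h5
  exact h5.symm


lemma fin_normal {k Ω : Type*} [Field k] [CharZero k] [Field Ω] [Algebra k Ω] [IsGalois k Ω] (F : Set Ω) (hF : F.Finite) :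
    ∃ (K : IntermediateField k Ω) (d : ℕ), FiniteDimensional k K ∧ F ⊆ K ∧ d ≠ 0 ∧
      ∀ ρ : Ω ≃ₐ[k] Ω, ∀ x ∈ K, (ρ ^ d) x = x := by
  let F0 := IntermediateField.adjoin k F
  have : Finite F := hF.to_subtype
  have hfd : FiniteDimensional k F0 := IntermediateField.finiteDimensional_adjoin
    (fun x _ => (Normal.isIntegral inferInstance x : IsIntegral k x))
  let K := IntermediateField.normalClosure k F0 Ω
  have hK : FiniteDimensional k K := inferInstance
  have hn : Normal k K := inferInstance
  refine ⟨K, Nat.card (K ≃ₐ[k] K), hK, ?_, Nat.card_pos.ne', ?_⟩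
  · exact (IntermediateField.subset_adjoin k F).trans (IntermediateField.le_normalClosure F0)
  · intro ρ x hx
    have h1 : AlgEquiv.restrictNormalHom K (ρ ^ Nat.card (K ≃ₐ[k] K)) = 1 := by
      rw [map_pow, pow_card_eq_one']
    have h2 := AlgEquiv.restrictNormal_commutes (ρ ^ Nat.card (K ≃ₐ[k] K)) K ⟨x, hx⟩
    have h3 : (ρ ^ Nat.card (K ≃ₐ[k] K)).restrictNormal K = 1 := h1
    rw [h3] at h2
    exact h2.symm

lemma exists_c (N : ℕ) (hN : N ≠ 0) : ∃ c : ℕ, c ≠ 0 ∧ c.Coprime N ∧ ∀ d : ℕ,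
    Nat.gcd (c ^ d - 1) N ∣ (2 ^ d - 1) * (3 ^ d - 1) := by
  obtain ⟨e, m, hm, rfl⟩ := Nat.exists_eq_two_pow_mul_odd hN
  have hco : Nat.Coprime m (2 ^ e) := by
    apply Nat.Coprime.pow_right
    exact (Nat.coprime_two_right).2 hm
  obtain ⟨c, hc1, hc2⟩ := Nat.chineseRemainder hco 2 3
  have hcm : c.Coprime m := by
    have : Nat.gcd c m = Nat.gcd 2 m := hc1.gcd_eq
    rw [Nat.Coprime, this]; exact (Nat.coprime_two_left).2 hm
  have hce : c.Coprime (2 ^ e) := by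
    have : Nat.gcd c (2 ^ e) = Nat.gcd 3 (2 ^ e) := hc2.gcd_eq
    rw [Nat.Coprime, this]; exact Nat.Coprime.pow_right _ (by norm_num)
  have key : ∀ c a M d : ℕ, 0 < c → 0 < a → c ≡ a [MOD M] → Nat.gcd (c ^ d - 1) M ∣ a ^ d - 1 := by
    intro c a M d hc ha h
    have h1 : c ^ d - 1 ≡ a ^ d - 1 [MOD M] := by
      apply Nat.ModEq.add_right_cancel' 1
      rw [Nat.sub_add_cancel (Nat.one_le_pow _ _ hc), Nat.sub_add_cancel (Nat.one_le_pow _ _ ha)]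
      exact h.pow d
    rw [h1.gcd_eq]
    exact Nat.gcd_dvd_left _ _
  have hc' : 0 < c + 2 ^ e * m := by positivity
  refine ⟨c + 2 ^ e * m, hc'.ne', ?_, ?_⟩
  · rw [Nat.coprime_add_self_left]; exact Nat.Coprime.mul_right hce hcm
  · intro d
    rw [mul_comm (2 ^ e) m, Nat.Coprime.gcd_mul _ hco]
    rw [mul_comm m] 
    apply mul_dvd_mul
    · apply key _ _ _ _ hc' (by norm_num)
      simpa [Nat.ModEq] using hc1
    · apply key _ _ _ _ hc' (by norm_num)
      simpa [Nat.ModEq] using hc2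

lemma kummer {Ω : Type*} [Field Ω] [CharZero Ω] [IsGalois ℚ Ω] (K : IntermediateField ℚ Ω) (d : ℕ) 
    (hd : ∀ ρ : Ω ≃ₐ[ℚ] Ω, ∀ x ∈ K, (ρ ^ d) x = x) (N : ℕ) (hN : N ≠ 0) (ζ y : Ω) (hζ : IsPrimitiveRoot ζ N)
    (hy0 : y ≠ 0) (hyN : y ^ N ∈ K) (hfix : ∀ σ : Ω ≃ₐ[ℚ] Ω, (∀ x ∈ K, σ x = x) → σ ζ = ζ → σ y = y) :
    ∃ v ∈ K, v ^ N = (y ^ N) ^ ((2 ^ d - 1) * (3 ^ d - 1)) := by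
  have hNz : NeZero N := ⟨hN⟩
  obtain ⟨c, hc0, hcN, hc⟩ := exists_c N hN
  obtain ⟨ρ, hρ⟩ : ∃ ρ : Ω ≃ₐ[ℚ] Ω, ρ ζ = ζ ^ c := by
    rw [← isConjRoot_iff_exists_algEquiv]
    change minpoly ℚ _ = minpoly ℚ _
    rw [← Polynomial.cyclotomic_eq_minpoly_rat hζ (Nat.pos_of_ne_zero hN),
      ← Polynomial.cyclotomic_eq_minpoly_rat (hζ.pow_of_coprime c hcN) (Nat.pos_of_ne_zero hN)]
  have hτζ : (ρ ^ d) ζ = ζ ^ (c ^ d) := by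
    clear hc hd
    induction d with
    | zero => simp
    | succ n ih =>
      rw [pow_succ', AlgEquiv.mul_apply, ih, map_pow, hρ, ← pow_mul, pow_succ' c]
  have hτK := hd ρ
  set τ := ρ ^ d with hτdef
  set χ := c ^ d with hχ
  have hχ1 : 1 ≤ χ := Nat.one_le_pow _ _ (Nat.pos_of_ne_zero hc0)
  have hw : τ y / y ^ χ ∈ K := by
    rw [← InfiniteGalois.fixedField_fixingSubgroup K, IntermediateField.mem_fixedField_iff]
    intro σ hσ
    rw [IntermediateField.mem_fixingSubgroup_iff] at hσ
    have hσζ : ∃ s, σ ζ = ζ ^ s := by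
      obtain ⟨i, _, hi⟩ := hζ.eq_pow_of_pow_eq_one (ξ := σ ζ) (by rw [← map_pow, hζ.pow_eq_one, map_one])
      exact ⟨i, hi.symm⟩
    obtain ⟨s, hs⟩ := hσζ
    have hcomm : σ (τ y) = τ (σ y) := by
      have := hfix ((τ * σ)⁻¹ * (σ * τ)) ?_ ?_
      · rw [AlgEquiv.mul_apply] at this
        have h2 := congrArg (τ * σ) this
        rw [← AlgEquiv.mul_apply, mul_inv_cancel] at h2
        simpa using h2
      · intro x hx
        rw [AlgEquiv.mul_apply]
        have : (σ * τ) x = (τ * σ) x := by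
          rw [AlgEquiv.mul_apply, AlgEquiv.mul_apply, hτK x hx, hσ x hx, hτK x hx]
        rw [this, ← AlgEquiv.mul_apply, inv_mul_cancel]; rfl
      · rw [AlgEquiv.mul_apply]
        have : (σ * τ) ζ = (τ * σ) ζ := by
          rw [AlgEquiv.mul_apply, AlgEquiv.mul_apply, hτζ, hs, map_pow, map_pow, hτζ, hs, ← pow_mul, ← pow_mul, mul_comm]
        rw [this, ← AlgEquiv.mul_apply, inv_mul_cancel]; rfl
    obtain ⟨i, _, hi⟩ := hζ.eq_pow_of_pow_eq_one (ξ := σ y / y) (by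
      rw [div_pow, ← map_pow, hσ _ hyN, div_self (pow_ne_zero _ hy0)])
    have hσy : σ y = ζ ^ i * y := by rw [hi, div_mul_cancel₀ _ hy0]
    have hζ0 : ζ ≠ 0 := hζ.ne_zero hN
    rw [map_div₀, hcomm, map_pow, hσy, map_mul, map_pow, hτζ]
    have : τ y ≠ 0 := by simpa using hy0
    field_simp
    try ring
  set w := τ y / y ^ χ with hwdef
  have hw0 : w ≠ 0 := div_ne_zero (by simpa using hy0) (pow_ne_zero _ hy0)
  set B := y ^ N with hB
  have hB0 : B ≠ 0 := pow_ne_zero _ hy0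
  have hwN : B ^ (χ - 1) = (w⁻¹) ^ N := by
    have h1 : w ^ N * B ^ χ = B := by
      rw [hwdef, div_pow, ← map_pow, hτK _ hyN, hB, ← pow_mul, ← pow_mul, mul_comm χ N, div_mul_cancel₀ _ (pow_ne_zero _ hy0)]
    rw [inv_pow]
    apply eq_inv_of_mul_eq_one_left
    apply mul_right_cancel₀ hB0
    rw [one_mul]
    conv_rhs => rw [← h1]
    rw [mul_right_comm, ← pow_succ, Nat.sub_add_cancel hχ1, mul_comm]
  obtain ⟨t, ht⟩ := hc d
  let u := Nat.gcdA (χ - 1) N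
  let u' := Nat.gcdB (χ - 1) N
  have hbz : ((Nat.gcd (χ - 1) N : ℕ) : ℤ) = ((χ - 1 : ℕ) : ℤ) * u + (N : ℤ) * u' := Nat.gcd_eq_gcd_ab (χ - 1) N
  refine ⟨(w⁻¹ ^ u * B ^ u') ^ t, pow_mem (mul_mem (zpow_mem (inv_mem hw) _) (zpow_mem hyN _)) _, ?_⟩
  rw [ht, pow_mul, ← pow_mul, mul_comm t N, pow_mul]
  congr 1
  rw [← zpow_natCast B (Nat.gcd _ _), hbz, zpow_add₀ hB0, zpow_mul, zpow_natCast, hwN, mul_pow, zpow_mul, zpow_natCast]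
  congr 1
  · rw [← zpow_natCast, ← zpow_natCast, ← zpow_mul, ← zpow_mul, mul_comm]
  · rw [← zpow_natCast, ← zpow_natCast, ← zpow_mul, ← zpow_mul, mul_comm]

lemma tors {K : Type*} [Field K] [NumberField K] (A : K) (hA : A ≠ 0) (D : Set ℕ) (hD : D.Infinite) (hD0 : 0 ∉ D)
    (h : ∀ N ∈ D, ∃ v : K, v ^ N = A) : ∃ n : ℕ, n ≠ 0 ∧ A ^ n = 1 := by
  have halg : IsAlgebraic ℤ A := by
    have : IsAlgebraic ℚ A := Algebra.IsAlgebraic.isAlgebraic A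
    exact (IsFractionRing.isAlgebraic_iff ℤ ℚ K).2 this
  obtain ⟨m, hm, hmA⟩ := halg.exists_integral_multiple
  have hm0 : (m : K) ≠ 0 := by exact_mod_cast hm
  obtain ⟨R, hR1, hR⟩ : ∃ R : ℝ, 1 ≤ R ∧ ∀ φ : K →+* ℂ, ‖φ A‖ ≤ R := by
    have : Finite (K →+* ℂ) := inferInstance
    obtain ⟨R, hR⟩ := (Set.finite_range (fun φ : K →+* ℂ => ‖φ A‖)).bddAbove
    exact ⟨max 1 R, le_max_left _ _, fun φ => (hR ⟨φ, rfl⟩).trans (le_max_right _ _)⟩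
  have hfin := NumberField.Embeddings.finite_of_norm_le K ℂ (|(m : ℝ)| * R)
  obtain ⟨x, hx, D', hD', hD'inf, hx'⟩ := pigeon hD (fun N (x : K) => ∃ v : K, v ^ N = A ∧ x = m * v) _ hfin (by
    intro N hN
    have hN0 : N ≠ 0 := fun h => hD0 (h ▸ hN)
    obtain ⟨v, hv⟩ := h N hN
    refine ⟨m * v, ⟨?_, ?_⟩, v, hv, rfl⟩
    · apply IsIntegral.of_pow (Nat.pos_of_ne_zero hN0)
      have : ((m : K) * v) ^ N = (m : K) ^ (N - 1) * (m • A) := by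
        rw [mul_pow, hv, zsmul_eq_mul, ← mul_assoc, ← pow_succ, Nat.sub_add_cancel (Nat.pos_of_ne_zero hN0)]
      rw [this]
      exact IsIntegral.mul (IsIntegral.pow (by simpa using (isIntegral_algebraMap (R := ℤ) (A := K) (x := m))) _) hmA
    · intro φ
      rw [map_mul, map_intCast, norm_mul, Complex.norm_intCast]
      gcongr
      by_contra hlt
      push Not at hlt
      have h1 : ‖φ v‖ ^ N ≤ R := by rw [← norm_pow, ← map_pow, hv]; exact hR φ
      have h2 : ‖φ v‖ ≤ ‖φ v‖ ^ N := le_self_pow₀ (hR1.trans hlt.le) hN0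
      linarith)
  obtain ⟨N, hN, N', hN', hlt⟩ : ∃ N ∈ D', ∃ N' ∈ D', N < N' := by
    obtain ⟨N, hN⟩ := hD'inf.nonempty
    obtain ⟨N', hN', h⟩ := hD'inf.exists_gt N
    exact ⟨N, hN, N', hN', h⟩
  obtain ⟨v, hv, hxv⟩ := hx' N hN
  obtain ⟨v', hv', hxv'⟩ := hx' N' hN'
  have e : v' = v := mul_left_cancel₀ hm0 (hxv'.symm.trans hxv)
  subst e
  have hN0 : N ≠ 0 := fun h => hD0 (h ▸ hD' hN)
  have hv0 : v' ≠ 0 := by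
    rintro rfl
    rw [zero_pow hN0] at hv; exact hA hv.symm
  refine ⟨N' - N, by omega, ?_⟩
  have : v' ^ (N' - N) = 1 := by
    apply mul_right_cancel₀ (pow_ne_zero N hv0)
    rw [← pow_add, Nat.sub_add_cancel hlt.le, hv', hv, one_mul]
  rw [← hv, ← pow_mul, mul_comm, pow_mul, this, one_pow]


lemma NonDeg.congr {ι : Type*} {I : Finset ι} {y y' : ι → ℂ} (h : NonDeg I y) (e : ∀ k ∈ I, y k = y' k) : NonDeg I y' := by
  refine ⟨?_, fun J hJ hne hJI => ?_⟩
  · rw [← Finset.sum_congr rfl e]; exact h.1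
  · rw [← Finset.sum_congr rfl (fun k hk => e k (hJ hk))]; exact h.2 J hJ hne hJI

lemma descent {Ω ι : Type*} [Field Ω] [CharZero Ω] [Algebra Ω ℂ] (I : Finset ι) (c : ι → ℂ) :
    ∃ F : Set Ω, F.Finite ∧ ∀ σ : Ω ≃ₐ[ℚ] Ω, (∀ x ∈ F, σ x = x) → ∀ x : ι → Ω,
      ∑ k ∈ I, c k * algebraMap Ω ℂ (x k) = 0 → ∑ k ∈ I, c k * algebraMap Ω ℂ (σ (x k)) = 0 := by
  classical
  let W := Submodule.span Ω (c '' (I : Set ι))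
  have hW : Module.Finite Ω W := Module.Finite.span_of_finite Ω (I.finite_toSet.image c)
  let b := Module.finBasis Ω W
  let c' : ι → W := fun k => if h : k ∈ I then ⟨c k, Submodule.subset_span ⟨k, h, rfl⟩⟩ else 0
  have hc' : ∀ k ∈ I, (c' k : ℂ) = c k := fun k hk => by simp [c', hk]
  have hsum : ∀ x : ι → Ω, ((∑ k ∈ I, x k • c' k : W) : ℂ) = ∑ k ∈ I, c k * algebraMap Ω ℂ (x k) := by
    intro x
    rw [Submodule.coe_sum]
    refine Finset.sum_congr rfl fun k hk => ?_
    rw [Submodule.coe_smul, hc' k hk, Algebra.smul_def, mul_comm]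
  refine ⟨(fun p : ι × _ => b.repr (c' p.1) p.2) '' ((I : Set ι) ×ˢ Set.univ), ?_, ?_⟩
  · exact (I.finite_toSet.prod Set.finite_univ).image _
  · intro σ hσ x hx
    rw [← hsum] at hx ⊢
    have hx' : ∑ k ∈ I, x k • c' k = 0 := Subtype.ext hx
    have : ∑ k ∈ I, σ (x k) • c' k = 0 := by
      apply b.ext_elem
      intro i
      have h1 := congrArg (fun w => σ (b.repr w i)) hx'
      simp only [map_sum, map_smul, Finsupp.coe_finsetSum, Finset.sum_apply, Finsupp.smul_apply, smul_eq_mul, map_mul,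
        map_zero, Finsupp.coe_zero, Pi.zero_apply] at h1 ⊢
      rw [← h1]
      refine Finset.sum_congr rfl fun k hk => ?_
      rw [hσ (b.repr (c' k) i) ⟨(k, i), ⟨hk, Set.mem_univ _⟩, rfl⟩]
    rw [this]; rfl

lemma kfix {Ω ι : Type*} [Field Ω] [CharZero Ω] [Algebra Ω ℂ] (K : IntermediateField ℚ Ω) (I : Finset ι) (c : ι → ℂ)
    (hdesc : ∀ σ : Ω ≃ₐ[ℚ] Ω, (∀ x ∈ K, σ x = x) → ∀ x : ι → Ω,
      ∑ k ∈ I, c k * algebraMap Ω ℂ (x k) = 0 → ∑ k ∈ I, c k * algebraMap Ω ℂ (σ (x k)) = 0)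
    (N : ℕ) (hN : N ≠ 0) (ζ : Ω) (hζ : IsPrimitiveRoot ζ N) (X : ι → Ω) (hX0 : ∀ k, X k ≠ 0) (hXN : ∀ k, X k ^ N ∈ K)
    (hnd : NonDeg I (fun k => c k * algebraMap Ω ℂ (X k))) (k0 : ι) (hk0 : k0 ∈ I) (hX1 : X k0 = 1) :
    ∀ σ : Ω ≃ₐ[ℚ] Ω, (∀ x ∈ K, σ x = x) → σ ζ = ζ → ∀ k ∈ I, σ (X k) = X k := by
  classical
  have hNz : NeZero N := ⟨hN⟩
  let H : Subgroup (Ω ≃ₐ[ℚ] Ω) := K.fixingSubgroup ⊓ MulAction.stabilizer (Ω ≃ₐ[ℚ] Ω) ζ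
  have hH1 : ∀ σ : H, ∀ x ∈ K, (σ : Ω ≃ₐ[ℚ] Ω) x = x := fun σ => (IntermediateField.mem_fixingSubgroup_iff K _).1 σ.2.1
  have hH2 : ∀ σ : H, (σ : Ω ≃ₐ[ℚ] Ω) ζ = ζ := fun σ => MulAction.mem_stabilizer_iff.1 σ.2.2
  have hroot : ∀ (σ τ : H) k, (σ : Ω ≃ₐ[ℚ] Ω) ((τ : Ω ≃ₐ[ℚ] Ω) (X k) / X k) = (τ : Ω ≃ₐ[ℚ] Ω) (X k) / X k := by
    intro σ τ k
    obtain ⟨i, _, hi⟩ := hζ.eq_pow_of_pow_eq_one (ξ := (τ : Ω ≃ₐ[ℚ] Ω) (X k) / X k) (by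
      rw [div_pow, ← map_pow, hH1 τ _ (hXN k), div_self (pow_ne_zero _ (hX0 k))])
    rw [← hi, map_pow, hH2]
  let χ : ι → (H →* ℂ) := fun k =>
    { toFun := fun σ => algebraMap Ω ℂ ((σ : Ω ≃ₐ[ℚ] Ω) (X k) / X k)
      map_one' := by simp [hX0 k]
      map_mul' := fun σ τ => by
        rw [← map_mul]
        congr 1
        rw [← hroot σ τ k, map_div₀, Subgroup.coe_mul, AlgEquiv.mul_apply]
        have : (σ : Ω ≃ₐ[ℚ] Ω) (X k) ≠ 0 := by simpa using hX0 k
        field_simp [hX0 k] }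
  have hχ : ∀ k (σ : H), χ k σ = algebraMap Ω ℂ ((σ : Ω ≃ₐ[ℚ] Ω) (X k) / X k) := fun k σ => rfl
  have hX0' : ∀ k, algebraMap Ω ℂ (X k) ≠ 0 := fun k => by simpa using hX0 k
  have h1 := char_group I χ (fun k => c k * algebraMap Ω ℂ (X k)) (by
    intro σ
    rw [← hdesc σ (hH1 σ) X hnd.1]
    refine Finset.sum_congr rfl fun k _ => ?_
    rw [hχ, map_div₀, mul_assoc, mul_div_cancel₀ _ (hX0' k)]) (fun ψ => ψ = 1)
  have hk1 : χ k0 = 1 := by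
    ext σ
    rw [hχ, hX1]; simp
  have h3 : I.filter (fun i => χ i = 1) = I := by
    by_contra hne
    exact hnd.2 (I.filter (fun i => χ i = 1)) (Finset.filter_subset _ _) ⟨k0, Finset.mem_filter.2 ⟨hk0, hk1⟩⟩ hne h1
  intro σ hσ hσζ k hk
  have hσH : σ ∈ H := ⟨(IntermediateField.mem_fixingSubgroup_iff K _).2 hσ, hσζ⟩
  have h4 : k ∈ I.filter (fun i => χ i = 1) := by rw [h3]; exact hk
  have h5 := DFunLike.congr_fun (Finset.mem_filter.1 h4).2 ⟨σ, hσH⟩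
  rw [hχ, MonoidHom.one_apply, ← map_one (algebraMap Ω ℂ)] at h5
  exact (div_eq_one_iff_eq (hX0 k)).1 ((algebraMap Ω ℂ).injective h5)

lemma ks_den {Ω ι : Type*} [Field Ω] [CharZero Ω] [IsGalois ℚ Ω] [Algebra Ω ℂ]
    (hΩ : ∀ x : ℂ, IsAlgebraic ℚ x → ∃ y : Ω, algebraMap Ω ℂ y = x)
    (I : Finset ι) (k0 : ι) (hk0 : k0 ∈ I) (c β : ι → ℂ) (hβ0 : β k0 = 0) (hα : ∀ k, IsAlgebraic ℚ (exp (β k)))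
    (T : Set ℚ) (hT : (Rat.den '' T).Infinite)
    (hnd : ∀ q ∈ T, NonDeg I (fun k => c k * exp (q * β k))) : ∀ k ∈ I, ∃ n : ℕ, n ≠ 0 ∧ exp (n * β k) = 1 := by
  classical
  have hinj : Function.Injective (algebraMap Ω ℂ) := (algebraMap Ω ℂ).injective
  obtain ⟨F, hF, hdesc⟩ := descent (Ω := Ω) I c
  choose e he using fun k => hΩ _ (hα k)
  -- make the field contain all needed powers
  obtain ⟨K, d, hKfd, hFK, hd0, hd⟩ := fin_normal (k := ℚ) (F ∪ e '' (I : Set ι)) (hF.union (I.finite_toSet.image e))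
  have hnf : NumberField K := by
    refine @NumberField.mk _ _ _ ?_
    convert hKfd
  have heK : ∀ k ∈ I, e k ∈ K := fun k hk => hFK (Or.inr ⟨k, hk, rfl⟩)
  have he0 : ∀ k, e k ≠ 0 := by
    intro k h
    have := he k
    rw [h, map_zero] at this
    exact Complex.exp_ne_zero _ this.symm
  intro k hk
  have key : ∀ N ∈ Rat.den '' T, ∃ v : K, v ^ N = (⟨e k, heK k hk⟩ : K) ^ ((2 ^ d - 1) * (3 ^ d - 1)) := by
    rintro _ ⟨q, hq, rfl⟩
    have hN : q.den ≠ 0 := q.den_nz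
    have hNC : (q.den : ℂ) ≠ 0 := by exact_mod_cast hN
    obtain ⟨ζ, hζ'⟩ := hΩ (exp (2 * Real.pi * Complex.I / q.den))
      (IsAlgebraic.of_pow (Nat.pos_of_ne_zero hN) (by
        rw [(Complex.isPrimitiveRoot_exp q.den hN).pow_eq_one]; exact isAlgebraic_one))
    have hζ : IsPrimitiveRoot ζ q.den := by
      apply IsPrimitiveRoot.of_map_of_injective (f := algebraMap Ω ℂ) _ hinj
      rw [hζ']; exact Complex.isPrimitiveRoot_exp q.den hN
    have hpow : ∀ j, exp (β j / q.den) ^ q.den = exp (β j) := by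
      intro j
      rw [← Complex.exp_nat_mul, mul_div_cancel₀ _ hNC]
    have : ∀ j, ∃ y : Ω, algebraMap Ω ℂ y = exp (β j / q.den) := fun j =>
      hΩ _ (IsAlgebraic.of_pow (Nat.pos_of_ne_zero hN) (by rw [hpow]; exact hα j))
    choose y hy using this
    have hyN : ∀ j, y j ^ q.den = e j := by
      intro j
      apply hinj
      rw [map_pow, hy, hpow, he]
    have hy0 : ∀ j, y j ≠ 0 := fun j h => he0 j (by rw [← hyN, h, zero_pow hN])
    let X : ι → Ω := fun j => if j ∈ I then y j ^ q.num else 1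
    have hXI : ∀ j ∈ I, X j = y j ^ q.num := fun j hj => if_pos hj
    have hX : ∀ j ∈ I, algebraMap Ω ℂ (X j) = exp (q * β j) := by
      intro j hj
      rw [hXI j hj, map_zpow₀, hy, ← Complex.exp_int_mul]
      congr 1
      have : (q : ℂ) = q.num / q.den := by exact_mod_cast (Rat.num_div_den q).symm
      rw [this]; ring
    have hfix := kfix K I c (fun σ hσ => hdesc σ (fun x hx => hσ x (hFK (Or.inl hx)))) q.den hN ζ hζ X
      (by
        intro j
        by_cases hj : j ∈ I
        · rw [hXI j hj]; exact zpow_ne_zero _ (hy0 j)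
        · simp [X, hj])
      (by
        intro j
        by_cases hj : j ∈ I
        · rw [hXI j hj, ← zpow_natCast, ← zpow_mul, mul_comm, zpow_mul, zpow_natCast, hyN]
          exact zpow_mem (heK j hj) _
        · simp [X, hj])
      ((hnd q hq).congr (fun j hj => by rw [hX j hj])) k0 hk0
      (by
        apply hinj
        rw [hX k0 hk0, hβ0]; simp)
    obtain ⟨v, hv, hvN⟩ := kummer K d hd q.den hN ζ (y k) hζ (hy0 k) (by rw [hyN]; exact heK k hk) (by
      intro σ hσ hσζ
      have h1 := hfix σ hσ hσζ k hk
      rw [hXI k hk, map_zpow₀] at h1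
      have h2 : σ (y k) ^ q.den = y k ^ q.den := by
        rw [← map_pow, hyN]; exact hσ _ (heK k hk)
      have hco : IsCoprime q.num (q.den : ℤ) := Int.isCoprime_iff_nat_coprime.2 (by simpa using q.reduced)
      obtain ⟨u, w, huw⟩ := hco
      have hexp : ∀ z : Ω, z ≠ 0 → z = (z ^ q.num) ^ u * (z ^ q.den) ^ w := by
        intro z hz
        rw [← zpow_natCast, ← zpow_mul, ← zpow_mul, ← zpow_add₀ hz, mul_comm q.num, mul_comm _ w, huw, zpow_one]
      have hσ0 : σ (y k) ≠ 0 := by simpa using hy0 k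
      rw [hexp _ hσ0, h1, h2, ← hexp _ (hy0 k)])
    refine ⟨⟨v, hv⟩, ?_⟩
    apply Subtype.ext
    change v ^ q.den = (e k) ^ _
    rw [hvN, hyN]
  have hL : (2 ^ d - 1) * (3 ^ d - 1) ≠ 0 := by
    have h2 : 1 < 2 ^ d := Nat.one_lt_pow hd0 (by norm_num)
    have h3 : 1 < 3 ^ d := Nat.one_lt_pow hd0 (by norm_num)
    exact mul_ne_zero (by omega) (by omega)
  obtain ⟨n, hn, hn1⟩ := tors _ (pow_ne_zero _ (fun h => he0 k (congrArg Subtype.val h))) _ hT (by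
    rintro ⟨q, _, hq⟩
    exact q.den_nz hq) key
  refine ⟨((2 ^ d - 1) * (3 ^ d - 1)) * n, mul_ne_zero hL hn, ?_⟩
  rw [← pow_mul] at hn1
  have h1 : (e k) ^ (((2 ^ d - 1) * (3 ^ d - 1)) * n) = 1 := congrArg Subtype.val hn1
  rw [Complex.exp_nat_mul, ← he k, ← map_pow, h1, map_one]

lemma ks_tot {ι : Type*}
    (I : Finset ι) (k0 : ι) (hk0 : k0 ∈ I) (c β : ι → ℂ) (hβ0 : β k0 = 0) (hα : ∀ k, IsAlgebraic ℚ (exp (β k)))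
    (T : Set ℚ) (hT : T.Infinite)
    (hnd : ∀ q ∈ T, NonDeg I (fun k => c k * exp (q * β k))) : ∀ k ∈ I, ∃ n : ℕ, n ≠ 0 ∧ exp (n * β k) = 1 := by
  classical
  by_cases hden : (Rat.den '' T).Infinite
  · let Ω := algebraicClosure ℚ ℂ
    have h1 : IsAlgClosure ℚ Ω := by
      have := @algebraicClosure.isAlgClosure ℚ ℂ _ _ _ _
      convert this
      · rfl
      · exact Subsingleton.elim _ _
    have : IsGalois ℚ Ω := IsAlgClosure.isGalois ℚ Ω
    exact ks_den (Ω := Ω) (fun x hx => ⟨⟨x, mem_algebraicClosure_iff.2 hx⟩, rfl⟩) I k0 hk0 c β hβ0 hα T hden hnd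
  · rw [Set.not_infinite] at hden
    let M := ∏ n ∈ hden.toFinset, n
    have hM : M ≠ 0 := by
      rw [Finset.prod_ne_zero_iff]
      intro n hn
      obtain ⟨q, _, rfl⟩ := hden.mem_toFinset.1 hn
      exact q.den_nz
    have hMC : (M : ℂ) ≠ 0 := by exact_mod_cast hM
    have hMQ : (M : ℚ) ≠ 0 := by exact_mod_cast hM
    have hq : ∀ q ∈ T, ∃ a : ℤ, q = a / M := by
      intro q hq
      obtain ⟨t, ht⟩ : q.den ∣ M := Finset.dvd_prod_of_mem (fun n : ℕ => n) (hden.mem_toFinset.2 ⟨q, hq, rfl⟩)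
      refine ⟨q.num * t, ?_⟩
      rw [eq_div_iff hMQ, ht]
      push_cast
      rw [← mul_assoc, Rat.mul_den_eq_num]
    have key : ∀ ε : ℤ, (ε = 1 ∨ ε = -1) → {n : ℕ | (((ε * n : ℤ) : ℚ) / M) ∈ T}.Infinite → ∀ k ∈ I, ∃ n : ℕ, n ≠ 0 ∧ exp (n * β k) = 1 := by
      intro ε hε hinf k hk
      have hε2 : (ε : ℂ) * ε = 1 := by rcases hε with rfl | rfl <;> norm_num
      have hpow : ∀ k, exp (ε * β k / M) ^ M = exp (β k) ^ ε := by
        intro k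
        rw [← Complex.exp_nat_mul, mul_div_cancel₀ _ hMC, ← Complex.exp_int_mul]
      obtain ⟨f, hf, hfe⟩ := sml I (fun k => exp (ε * β k / M)) c (fun k _ => by
          apply IsAlgebraic.of_pow (Nat.pos_of_ne_zero hM)
          rw [hpow]
          rcases hε with rfl | rfl
          · simpa using hα k
          · simpa using (hα k).inv) (fun k _ => Complex.exp_ne_zero _) _ hinf (by
          intro n hn
          refine (hnd _ hn).congr fun k _ => ?_
          rw [← Complex.exp_nat_mul]
          congr 2
          push_cast
          ring) k hk k0 hk0
      refine ⟨f, hf, ?_⟩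
      simp only [hβ0, mul_zero, zero_div, Complex.exp_zero, one_pow] at hfe
      have h1 : exp (f * β k) ^ ε = 1 := by
        have := congrArg (fun x => x ^ M) hfe
        simp only [one_pow] at this
        rw [← pow_mul, mul_comm f M, pow_mul, hpow] at this
        rw [Complex.exp_nat_mul, ← zpow_natCast, ← zpow_mul, mul_comm (f : ℤ), zpow_mul, zpow_natCast]
        exact this
      rcases hε with rfl | rfl
      · simpa using h1
      · simpa using h1
    obtain ⟨ε, hε, T', hT', hT'inf, hε'⟩ := pigeon hT (fun q (ε : ℤ) => ∃ n : ℕ, q = ((ε * n : ℤ) : ℚ) / M) {1, -1} (Set.toFinite _) (by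
      intro q hqT
      obtain ⟨a, ha⟩ := hq q hqT
      rcases le_total 0 a with h | h
      · refine ⟨1, by simp, a.natAbs, ?_⟩
        rw [ha]; congr 2; omega
      · refine ⟨-1, by simp, a.natAbs, ?_⟩
        rw [ha]; congr 2; omega)
    refine key ε (by simpa using hε) ?_
    intro hfin
    apply hT'inf
    refine (hfin.image (fun n : ℕ => (((ε * n : ℤ) : ℚ) / M))).subset ?_
    intro q hq
    obtain ⟨n, hn⟩ := hε' q hq
    exact ⟨n, by change _ ∈ T; rw [← hn]; exact hT' hq, hn.symm⟩

lemma ks {ι : Type*}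
    (I : Finset ι) (k0 : ι) (hk0 : k0 ∈ I) (c β : ι → ℂ) (hβ0 : β k0 = 0) (hα : ∀ k ∈ I, IsAlgebraic ℚ (exp (β k)))
    (T : Set ℚ) (hT : T.Infinite)
    (hnd : ∀ q ∈ T, NonDeg I (fun k => c k * exp (q * β k))) : ∀ k ∈ I, ∃ n : ℕ, n ≠ 0 ∧ exp (n * β k) = 1 := by
  classical
  intro k hk
  have := ks_tot I k0 hk0 c (fun k => if k ∈ I then β k else 0) (by simp [hk0, hβ0]) (by
    intro k
    by_cases h : k ∈ I
    · simpa [h] using hα k h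
    · simpa [h] using isAlgebraic_one) T hT (fun q hq => (hnd q hq).congr (fun k hk => by simp [hk])) k hk
  simpa [hk] using this


lemma NonDeg.smul {ι : Type*} {I : Finset ι} {y : ι → ℂ} (h : NonDeg I y) {t : ℂ} (ht : t ≠ 0) : NonDeg I (fun k => t * y k) := by
  refine ⟨?_, fun J hJ hne hJI => ?_⟩
  · rw [← Finset.mul_sum, h.1, mul_zero]
  · rw [← Finset.mul_sum]; exact mul_ne_zero ht (h.2 J hJ hne hJI)

lemma alg_of_acl_empty {x : ℂ} (h : x ∈ acl ∅) : IsAlgebraic ℚ x := by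
  rw [mem_acl, Algebra.adjoin_empty] at h
  have : Algebra.IsAlgebraic ℚ (⊥ : Subalgebra ℚ ℂ) := inferInstance
  exact h.restrictScalars ℚ

lemma coreA (I : Finset ℂ) (c : ℂ → ℂ) (hc : ∀ b ∈ I, c b ≠ 0) (S : Set ℂ) (hS : S.Infinite)
    (hz : ∀ z ∈ S, ∑ b ∈ I, c b * exp (b * z) = 0) (b₀ b1 : ℂ) (hb1I : b1 ∈ I) (hb1 : b1 ≠ b₀)
    (hq : ∀ b ∈ I, ∃ q : ℚ, b - b₀ = q * (b1 - b₀)) :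
    ∃ S' ⊆ S, S'.Infinite ∧ ∀ z ∈ S', ∀ z' ∈ S', ∀ b ∈ I, ∀ b' ∈ I, exp ((b - b') * (z - z')) = 1 := by
  classical
  choose! q hq using hq
  obtain ⟨N, hN, hm⟩ := common_den I q
  choose! m hm using hm
  set β := (b1 - b₀) / N with hβ
  have hNC : (N : ℂ) ≠ 0 := by exact_mod_cast hN
  have hmb : ∀ b ∈ I, b - b₀ = m b * β := by
    intro b hb
    rw [hq b hb, hm b hb, hβ]
    push_cast
    field_simp
  let M : ℤ := ∑ b ∈ I, |m b|
  have hM : ∀ b ∈ I, 0 ≤ m b + M := by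
    intro b hb
    have h1 : |m b| ≤ M := Finset.single_le_sum (f := fun b => |m b|) (fun i _ => abs_nonneg _) hb
    have := neg_abs_le (m b)
    linarith
  let e : ℂ → ℕ := fun b => (m b + M).toNat
  have he : ∀ b ∈ I, (e b : ℤ) = m b + M := fun b hb => Int.toNat_of_nonneg (hM b hb)
  let P : Polynomial ℂ := ∑ b ∈ I, Polynomial.monomial (e b) (c b)
  have hP : P ≠ 0 := by
    intro h
    have h1 : P.coeff (e b1) = c b1 := by
      simp only [P, Polynomial.finsetSum_coeff, Polynomial.coeff_monomial]
      rw [Finset.sum_eq_single b1]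
      · simp
      · intro b hb hne
        rw [if_neg]
        intro h2
        apply hne
        have h3 : m b = m b1 := by
          have := he b hb
          have := he b1 hb1I
          omega
        have := (hmb b hb).trans (h3 ▸ (hmb b1 hb1I).symm)
        exact sub_left_injective this
      · intro h; exact absurd hb1I h
    rw [h, Polynomial.coeff_zero] at h1
    exact hc b1 hb1I h1.symm
  obtain ⟨x, _, S', hS', hS'inf, hx⟩ := pigeon hS (fun z x => exp (β * z) = x) {x | P.IsRoot x} (Polynomial.finite_setOfPred_isRoot hP) (by
    intro z hzS
    refine ⟨exp (β * z), ?_, rfl⟩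
    change P.eval _ = 0
    have h1 : P.eval (exp (β * z)) = exp ((M * β - b₀) * z) * ∑ b ∈ I, c b * exp (b * z) := by
      rw [Finset.mul_sum, Polynomial.eval_finsetSum]
      refine Finset.sum_congr rfl fun b hb => ?_
      rw [Polynomial.eval_monomial, ← Complex.exp_nat_mul, mul_left_comm (exp _) (c b), ← Complex.exp_add]
      congr 2
      have h2 : ((e b : ℕ) : ℂ) = m b + M := by exact_mod_cast congrArg (Int.cast : ℤ → ℂ) (he b hb)
      have h3 := hmb b hb
      rw [h2]
      linear_combination (-z) * h3
    rw [h1, hz z hzS, mul_zero])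
  refine ⟨S', hS', hS'inf, ?_⟩
  intro z hz z' hz' b hb b' hb'
  have h1 : (b - b') * (z - z') = ((m b - m b' : ℤ) : ℂ) * (β * (z - z')) := by
    push_cast
    linear_combination (z - z') * (hmb b hb) - (z - z') * (hmb b' hb')
  rw [h1, Complex.exp_int_mul, mul_sub, Complex.exp_sub, hx z hz, hx z' hz']
  rw [div_self, one_zpow]
  rw [← hx z hz]; exact Complex.exp_ne_zero _

lemma exists_min_span (S : Set ℂ) (hS : S.Infinite) (W : Submodule ℚ ℂ) (hW : FiniteDimensional ℚ W) (hSW : ∀ z ∈ S, z ∈ W) :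
    ∃ S₁ ⊆ S, S₁.Infinite ∧ ∀ S' ⊆ S₁, S'.Infinite → ∀ X : Submodule ℚ ℂ, (∀ z ∈ S', ∀ z' ∈ S', z - z' ∈ X) →
      ∀ z ∈ S₁, ∀ z' ∈ S₁, z - z' ∈ X := by
  classical
  let sp : Set ℂ → Submodule ℚ ℂ := fun A => Submodule.span ℚ {x | ∃ z ∈ A, ∃ z' ∈ A, x = z - z'}
  have hex : ∃ n, ∃ S' ⊆ S, S'.Infinite ∧ Module.finrank ℚ (sp S') = n := ⟨_, S, subset_rfl, hS, rfl⟩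
  obtain ⟨S₁, hS₁, hinf, hn⟩ := Nat.find_spec hex
  have hmin : ∀ S' ⊆ S, S'.Infinite → Module.finrank ℚ (sp S₁) ≤ Module.finrank ℚ (sp S') := by
    intro S' hS' hS'inf
    rw [hn]
    exact Nat.find_min' hex ⟨S', hS', hS'inf, rfl⟩
  refine ⟨S₁, hS₁, hinf, ?_⟩
  intro S' hS' hS'inf X hX z hz z' hz'
  have h1 : sp S₁ ≤ W := by
    apply Submodule.span_le.2
    rintro _ ⟨a, ha, b, hb, rfl⟩
    exact W.sub_mem (hSW a (hS₁ ha)) (hSW b (hS₁ hb))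
  have h2 : FiniteDimensional ℚ (sp S₁) := Submodule.finiteDimensional_of_le h1
  have h3 : sp S' ≤ sp S₁ := by
    apply Submodule.span_mono
    rintro _ ⟨a, ha, b, hb, rfl⟩
    exact ⟨a, hS' ha, b, hS' hb, rfl⟩
  have h4 : sp S' = sp S₁ := Submodule.eq_of_le_of_finrank_le h3 (hmin S' (hS'.trans hS₁) hS'inf)
  have h5 : sp S' ≤ X := by
    apply Submodule.span_le.2
    rintro _ ⟨a, ha, b, hb, rfl⟩
    exact hX a ha b hb
  apply h5
  rw [h4]
  exact Submodule.subset_span ⟨z, hz, z', hz', rfl⟩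

lemma coreB (hSC : SchanuelConjecture) (C I : Finset ℂ) (c : ℂ → ℂ) (hc : ∀ b ∈ I, c b ≠ 0)
    (hI : ∀ b ∈ I, b ∈ acl (C : Set ℂ) ∧ c b ∈ acl (C : Set ℂ)) (S : Set ℂ) (hS : S.Infinite)
    (hSC' : ∀ z ∈ S, z ∈ acl (C : Set ℂ)) (hnd : ∀ z ∈ S, NonDeg I (fun b => c b * exp (b * z)))
    (b₀ b1 b2 : ℂ) (hb₀ : b₀ ∈ I) (hb1I : b1 ∈ I) (hb2I : b2 ∈ I) (hb1 : b1 - b₀ ≠ 0)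
    (hq : ∀ q : ℚ, b2 - b₀ ≠ q * (b1 - b₀)) : False := by
  classical
  obtain ⟨V, hV, hSV⟩ := p2 hSC C I c hI S hSC' hnd
  let W := V.map (LinearMap.mulLeft ℚ (b1 - b₀)⁻¹)
  have hW : FiniteDimensional ℚ W := inferInstance
  obtain ⟨S₁, hS₁, hS₁inf, hmin⟩ := exists_min_span S hS W hW (by
    intro z hz
    refine ⟨(b1 - b₀) * z, hSV z hz b1 hb1I b₀ hb₀, ?_⟩
    simp [inv_mul_cancel_left₀ hb1])
  have halg := alg_step I c hc S₁ hS₁inf (fun z hz => hnd z (hS₁ hz)) V (Submodule.fg_iff_finiteDimensional V |>.2 hV)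
    (fun z hz => hSV z (hS₁ hz)) hmin
  obtain ⟨z₀, hz₀⟩ := hS₁inf.nonempty
  obtain ⟨z₁, hz₁, hne⟩ := hS₁inf.exists_notMem_finset {z₀}
  have hu : z₁ - z₀ ≠ 0 := sub_ne_zero.2 (by simpa using hne)
  set u := z₁ - z₀ with hudef
  have hall : ∀ z ∈ S₁, ∃ q : ℚ, z = z₀ + q * u := by
    intro z hz
    by_contra hcon
    push Not at hcon
    refine four_exp hSC (b1 - b₀) (b2 - b₀) u (z - z₀) hb1 hq hu (fun q h => hcon q ?_)
      (halg _ hz₁ _ hz₀ _ hb1I _ hb₀) (halg _ hz _ hz₀ _ hb1I _ hb₀) (halg _ hz₁ _ hz₀ _ hb2I _ hb₀) (halg _ hz _ hz₀ _ hb2I _ hb₀)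
    rw [← h]; ring
  have hT : {q : ℚ | z₀ + q * u ∈ S₁}.Infinite := by
    intro hfin
    apply hS₁inf
    refine (hfin.image (fun q : ℚ => z₀ + q * u)).subset ?_
    intro z hz
    obtain ⟨q, rfl⟩ := hall z hz
    exact ⟨q, hz, rfl⟩
  have hks := ks I b₀ hb₀ (fun b => c b * exp (b * z₀)) (fun b => (b - b₀) * u) (by ring)
    (fun b hb => alg_of_acl_empty (halg _ hz₁ _ hz₀ _ hb _ hb₀)) _ hT (by
      intro q hq
      refine ((hnd _ (hS₁ hq)).smul (Complex.exp_ne_zero (-(b₀ * (q * u))))).congr ?_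
      intro b _
      rw [mul_left_comm, mul_assoc, ← Complex.exp_add, ← Complex.exp_add]
      congr 2
      ring)
  obtain ⟨n1, hn1, he1⟩ := hks b1 hb1I
  obtain ⟨n2, hn2, he2⟩ := hks b2 hb2I
  obtain ⟨k1, hk1⟩ := Complex.exp_eq_one_iff.1 he1
  obtain ⟨k2, hk2⟩ := Complex.exp_eq_one_iff.1 he2
  have hn1' : (n1 : ℂ) ≠ 0 := by exact_mod_cast hn1
  have hn2' : (n2 : ℂ) ≠ 0 := by exact_mod_cast hn2
  have hk10 : (k1 : ℂ) ≠ 0 := by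
    intro h
    rw [h, zero_mul] at hk1
    exact mul_ne_zero hn1' (mul_ne_zero hb1 hu) hk1
  apply hq ((k2 * n1) / (n2 * k1))
  push_cast
  rw [div_mul_eq_mul_div, eq_div_iff (mul_ne_zero hn2' hk10)]
  apply mul_right_cancel₀ hu
  linear_combination k1 * hk2 - k2 * hk1

lemma core (hSC : SchanuelConjecture) (C I : Finset ℂ) (c : ℂ → ℂ) (hc : ∀ b ∈ I, c b ≠ 0)
    (hI : ∀ b ∈ I, b ∈ acl (C : Set ℂ) ∧ c b ∈ acl (C : Set ℂ)) (S : Set ℂ) (hS : S.Infinite)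
    (hSC' : ∀ z ∈ S, z ∈ acl (C : Set ℂ)) (hne : I.Nonempty) (hnd : ∀ z ∈ S, NonDeg I (fun b => c b * exp (b * z))) :
    ∃ S' ⊆ S, S'.Infinite ∧ ∀ z ∈ S', ∀ z' ∈ S', ∀ b ∈ I, ∀ b' ∈ I, exp ((b - b') * (z - z')) = 1 := by
  obtain ⟨b₀, hb₀⟩ := hne
  by_cases h1 : ∃ b1 ∈ I, b1 ≠ b₀
  · obtain ⟨b1, hb1I, hb1⟩ := h1
    by_cases h2 : ∀ b ∈ I, ∃ q : ℚ, b - b₀ = q * (b1 - b₀)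
    · exact coreA I c hc S hS (fun z hz => (hnd z hz).1) b₀ b1 hb1I hb1 h2
    · push Not at h2
      obtain ⟨b2, hb2I, hb2⟩ := h2
      exact (coreB hSC C I c hc hI S hS hSC' hnd b₀ b1 b2 hb₀ hb1I hb2I (sub_ne_zero.2 hb1) hb2).elim
  · push Not at h1
    refine ⟨S, subset_rfl, hS, ?_⟩
    intro z _ z' _ b hb b' hb'
    rw [h1 b hb, h1 b' hb', sub_self, zero_mul, Complex.exp_zero]

theorem main (hSC : SchanuelConjecture)
    (f g : ℂ → ℂ) (hf : IsExpPoly f) (hg : IsExpPoly g) (hfirr : EIrreducible f)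
    (hinf : {z : ℂ | f z = 0 ∧ g z = 0}.Infinite) : EDvd f g := by
  by_contra hnd
  obtain ⟨I, c, hc, hfe⟩ := isExpPoly_canon hf
  obtain ⟨C, hC, hzC⟩ := phase1 hSC hg hfirr hnd I c hfe
  obtain ⟨S', -, hS'inf, hS'⟩ := stage c I {z : ℂ | f z = 0 ∧ g z = 0} (by
    intro J S hJ hS hSinf hJne hJnd
    exact core hSC C J c (fun b hb => hc b (hJ hb)) (fun b hb => hC b (hJ hb)) S hSinf
      (fun z hz => hzC z (hS hz).1 (hS hz).2) hJne hJnd) I.card I _ rfl subset_rfl subset_rfl hinf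
      (fun z hz => by rw [← hfe]; exact hz.1)
  obtain ⟨z₀, hz₀⟩ := hS'inf.nonempty
  obtain ⟨z₁, hz₁, hne⟩ := hS'inf.exists_notMem_finset {z₀}
  refine final_step hfirr (z₀ := z₀) (ω := z₁ - z₀) (sub_ne_zero.2 (by simpa using hne)) ?_
  intro m
  rw [hfe]
  exact hS' z₀ hz₀ z₁ hz₁ m

end Shp

/-- Assuming Schanuel's Conjecture: if `f` is irreducible and `f, g` are nonzero with
infinitely many common zeros, then `f` divides `g` in `𝓔`. -/
theorem shapiro_irreducible_divides (hSC : SchanuelConjecture)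
    (f g : ℂ → ℂ) (hf : IsExpPoly f) (hg : IsExpPoly g)
    (hf0 : f ≠ 0) (hg0 : g ≠ 0) (hfirr : EIrreducible f)
    (hinf : {z : ℂ | f z = 0 ∧ g z = 0}.Infinite) :
    EDvd f g := by
  exact Shp.main hSC f g hf hg hfirr hinf
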